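/- arXiv:1612.04051 — 9 statements merged into one kernel-verified Lean document; each statement's English description precedes it below -/
import Mathlib

section
/- Let X be a countably infinite connected graph with standard weights and bounded vertex degree, let K ⊆ X be finite, and let u : X → [0,∞) satisfy: u = 0 on K, u is strictly positive on X∖K, u is unbounded, u is harmonic on X∖K (i.e. Δu(x) = 0 for all x ∈ X∖K), and the restriction of u to X∖K is proper as a map to (0,∞). Define w(x) := (1/(2u(x))) · Σ_{y∼x} (u(x)^{1/2} − u(y)^{1/2})² for x ∈ X∖K. Then for every finitely supported φ : X → ℝ that vanishes on K, Σ_{x,y∈X, x∼y} (φ(x) − φ(y))² ≥ Σ_{x∈X∖K} w(x)·φ(x)² (the left-hand sum runs over ordered pairs of adjacent vertices, so each edge is counted twice). -/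
/-- Hardy inequality on a graph with standard weights, bounded degree,
with an unbounded positive function `u` harmonic and proper on `X \ K`. -/
theorem stmt0 (X : Type) [Countable X] [Infinite X]
    (Adj : X → X → Prop)
    (hsymm : ∀ x y, Adj x y → Adj y x)
    (hirr : ∀ x, ¬ Adj x x)
    (hlocfin : ∀ x, {y : X | Adj x y}.Finite)
    (hdeg : ∃ D : ℕ, ∀ x, ({y : X | Adj x y}).ncard ≤ D)
    (hconn : ∀ x y : X, Relation.ReflTransGen Adj x y)
    (K : Set X) (hK : K.Finite)
    (u : X → ℝ)
    (huK : ∀ x ∈ K, u x = 0)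
    (hupos : ∀ x ∉ K, 0 < u x)
    (huunbdd : ∀ M : ℝ, ∃ x : X, M < u x)
    (huharm : ∀ x ∉ K, (∑' y : {y : X // Adj x y}, (u x - u y.val)) = 0)
    (huproper : ∀ I : Set ℝ, IsCompact I →
      I ⊆ Set.range (fun x : {x : X // x ∉ K} => u x.val) →
      {x : X | x ∉ K ∧ u x ∈ I}.Finite)
    (w : X → ℝ)
    (hw : ∀ x ∉ K, w x =
      (1 / (2 * u x)) *
        ∑' y : {y : X // Adj x y}, (Real.sqrt (u x) - Real.sqrt (u y.val)) ^ 2) :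
    ∀ φ : X → ℝ, (Function.support φ).Finite → (∀ x ∈ K, φ x = 0) →
      (∑' p : {p : X × X // Adj p.1 p.2}, (φ p.val.1 - φ p.val.2) ^ 2)
        ≥ ∑' x : {x : X // x ∉ K}, w x.val * φ x.val ^ 2 := by
  classical
  intro φ hφ hφK
  set v : X → ℝ := fun x => Real.sqrt (u x) with hv
  have hv0 : ∀ x, 0 ≤ v x := fun x => Real.sqrt_nonneg _
  have hvpos : ∀ x ∉ K, 0 < v x := fun x hx => Real.sqrt_pos.2 (hupos x hx)
  have hunn : ∀ x, 0 ≤ u x := by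
    intro x
    by_cases hx : x ∈ K
    · exact (huK x hx).ge
    · exact (hupos x hx).le
  have hvsq : ∀ x, v x ^ 2 = u x := fun x => Real.sq_sqrt (hunn x)
  have hvK : ∀ x ∈ K, v x = 0 := by
    intro x hx
    simp [hv, huK x hx]
  have hfin : ∀ x, Finite {y : X // Adj x y} := fun x => (hlocfin x).to_subtype
  let G : {p : X × X // Adj p.1 p.2} → ℝ :=
    fun p => φ p.val.1 ^ 2 * (1 - v p.val.2 / v p.val.1)
  let F : {p : X × X // Adj p.1 p.2} → ℝ := fun p => (φ p.val.1 - φ p.val.2) ^ 2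
  let e : {p : X × X // Adj p.1 p.2} ≃ {p : X × X // Adj p.1 p.2} :=
    { toFun := fun p => ⟨(p.val.2, p.val.1), hsymm _ _ p.2⟩
      invFun := fun p => ⟨(p.val.2, p.val.1), hsymm _ _ p.2⟩
      left_inv := fun p => rfl
      right_inv := fun p => rfl }
  let σ : (Σ x : X, {y : X // Adj x y}) ≃ {p : X × X // Adj p.1 p.2} :=
    { toFun := fun q => ⟨(q.1, q.2.1), q.2.2⟩
      invFun := fun p => ⟨p.val.1, ⟨p.val.2, p.2⟩⟩
      left_inv := fun p => rfl
      right_inv := fun p => rfl }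
  have hP : {p : {p : X × X // Adj p.1 p.2} | p.val.1 ∈ Function.support φ}.Finite := by
    have h1 : (⋃ x ∈ Function.support φ,
        (fun y => (x, y)) '' {y : X | Adj x y}).Finite :=
      hφ.biUnion fun x _ => (hlocfin x).image _
    refine Set.Finite.subset (h1.preimage (Subtype.val_injective.injOn)) ?_
    rintro ⟨⟨x, y⟩, h⟩ hx
    simp only [Set.mem_preimage, Set.mem_iUnion]
    exact ⟨x, hx, y, h, rfl⟩
  have hGs : Summable G := by
    refine summable_of_hasFiniteSupport (hP.subset ?_)
    intro p hp hx
    apply hp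
    simp only [G, hx]
    ring
  have hGes : Summable (fun p => G (e p)) := (e.summable_iff).2 hGs
  have hFs : Summable F := by
    refine summable_of_hasFiniteSupport ((hP.union (hP.preimage e.injective.injOn)).subset ?_)
    intro p hp
    by_contra hcon
    simp only [Set.mem_union, Set.mem_ofPred_eq, Set.mem_preimage, Function.mem_support,
      not_or, not_not] at hcon
    apply hp
    have h2 : φ p.val.2 = 0 := hcon.2
    simp only [F, hcon.1, h2]
    ring
  have hpt : ∀ p, G p + G (e p) ≤ F p := by
    rintro ⟨⟨x, y⟩, h⟩
    change φ x ^ 2 * (1 - v y / v x) + φ y ^ 2 * (1 - v x / v y) ≤ (φ x - φ y) ^ 2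
    by_cases hx : x ∈ K
    · simp [hφK x hx, hvK x hx]
    by_cases hy : y ∈ K
    · simp [hφK y hy, hvK y hy]
    have a := hvpos x hx
    have b := hvpos y hy
    have key : (φ x - φ y) ^ 2 - (φ x ^ 2 * (1 - v y / v x) + φ y ^ 2 * (1 - v x / v y))
        = (φ x * v y - φ y * v x) ^ 2 / (v x * v y) := by
      field_simp
      ring
    have : 0 ≤ (φ x * v y - φ y * v x) ^ 2 / (v x * v y) := by positivity
    linarith
  have hle : 2 * ∑' p, G p ≤ ∑' p, F p := by
    have h1 := (hGs.add hGes).tsum_le_tsum hpt hFs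
    rw [hGs.tsum_add hGes, e.tsum_eq G] at h1
    linarith
  have hwx : ∀ x ∉ K, ∑' y : {y : X // Adj x y}, (1 - v y.val / v x) = w x := by
    intro x hx
    have a := hvpos x hx
    have := Fintype.ofFinite {y : X // Adj x y}
    have h0 := huharm x hx
    rw [hw x hx]
    rw [tsum_fintype] at h0 ⊢
    rw [tsum_fintype]
    have h3 : ∀ y : {y : X // Adj x y}, 1 - v y.val / v x =
        (1 / (2 * u x)) * (v x - v y.val) ^ 2 + (1 / (2 * u x)) * (u x - u y.val) := by
      intro y
      rw [← hvsq x, ← hvsq y.val]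
      field_simp
      ring
    rw [Finset.sum_congr rfl (fun y _ => h3 y), Finset.sum_add_distrib, ← Finset.mul_sum,
      ← Finset.mul_sum, h0]
    simp [hv]
  have hGsum : ∑' p, G p = ∑' x : {x : X // x ∉ K}, w x.val * φ x.val ^ 2 := by
    have h6 : Summable (fun q => G (σ q)) := (σ.summable_iff).2 hGs
    rw [← σ.tsum_eq G, h6.tsum_sigma]
    have h4 : ∀ x, ∑' y : {y : X // Adj x y}, G (σ ⟨x, y⟩) = w x * φ x ^ 2 := by
      intro x
      change ∑' y : {y : X // Adj x y}, φ x ^ 2 * (1 - v y.val / v x) = _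
      rw [tsum_mul_left]
      by_cases hx : x ∈ K
      · simp [hφK x hx]
      · rw [hwx x hx, mul_comm]
    have h5 := tsum_subtype_eq_of_support_subset (f := fun x => w x * φ x ^ 2)
      (s := {x | x ∉ K}) (by
        intro x hx hxK
        exact hx (by simp [hφK x hxK]))
    rw [tsum_congr h4]
    exact h5.symm
  have hnn : 0 ≤ ∑' x : {x : X // x ∉ K}, w x.val * φ x.val ^ 2 := by
    refine tsum_nonneg fun x => mul_nonneg ?_ (sq_nonneg _)
    rw [hw x.val x.2]
    have := hupos x.val x.2
    exact mul_nonneg (by positivity) (tsum_nonneg fun y => sq_nonneg _)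
  change ∑' p, F p ≥ _
  rw [hGsum] at hle
  linarith
end

section
/- Let X be a countably infinite connected graph with standard weights and bounded vertex degree, let o ∈ X be fixed, and let G : X → (0,∞) satisfy: ΔG(x) ≥ 0 for all x ∈ X, ΔG(x) = 0 for all x ≠ o, and G is proper as a map to (0,∞). Define w(x) := Δ(G^{1/2})(x) / G(x)^{1/2}. Then w ≥ 0, for every finitely supported φ : X → ℝ one has Σ_{x,y∈X, x∼y} (φ(x) − φ(y))² ≥ Σ_{x∈X} w(x)·φ(x)² (the left-hand sum runs over ordered pairs of adjacent vertices), and for every x ≠ o one has w(x) = (1/(2G(x))) · Σ_{y∼x} (G(x)^{1/2} − G(y)^{1/2})². -/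
/-- Hardy inequality with optimal weight built from a proper positive
superharmonic function `G` (e.g. a Green function) on a graph with standard weights. -/
theorem stmt1 (X : Type) [Countable X] [Infinite X]
    (Adj : X → X → Prop)
    (hsymm : ∀ x y, Adj x y → Adj y x)
    (hirr : ∀ x, ¬ Adj x x)
    (hlocfin : ∀ x, {y : X | Adj x y}.Finite)
    (hdeg : ∃ D : ℕ, ∀ x, ({y : X | Adj x y}).ncard ≤ D)
    (hconn : ∀ x y : X, Relation.ReflTransGen Adj x y)
    (o : X) (G : X → ℝ)
    (hGpos : ∀ x, 0 < G x)
    (hGsuper : ∀ x, 0 ≤ ∑' y : {y : X // Adj x y}, (G x - G y.val))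
    (hGharm : ∀ x, x ≠ o → (∑' y : {y : X // Adj x y}, (G x - G y.val)) = 0)
    (hGproper : ∀ I : Set ℝ, IsCompact I → I ⊆ Set.range G → (G ⁻¹' I).Finite)
    (w : X → ℝ)
    (hw : ∀ x, w x =
      (∑' y : {y : X // Adj x y}, (Real.sqrt (G x) - Real.sqrt (G y.val))) /
        Real.sqrt (G x)) :
    (∀ x, 0 ≤ w x) ∧
    (∀ φ : X → ℝ, (Function.support φ).Finite →
      (∑' p : {p : X × X // Adj p.1 p.2}, (φ p.val.1 - φ p.val.2) ^ 2)
        ≥ ∑' x : X, w x * φ x ^ 2) ∧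
    (∀ x, x ≠ o → w x =
      (1 / (2 * G x)) *
        ∑' y : {y : X // Adj x y}, (Real.sqrt (G x) - Real.sqrt (G y.val)) ^ 2) := by
  have hfin : ∀ x, Finite {y : X // Adj x y} := fun x => (hlocfin x).to_subtype
  have hsp : ∀ x, 0 < Real.sqrt (G x) := fun x => Real.sqrt_pos.2 (hGpos x)
  have hsq : ∀ x, Real.sqrt (G x) ^ 2 = G x := fun x => Real.sq_sqrt (hGpos x).le
  have key : ∀ x, w x = (1 / (2 * G x)) * (∑' y : {y : X // Adj x y}, (G x - G y.val)) +
      (1 / (2 * G x)) *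
        ∑' y : {y : X // Adj x y}, (Real.sqrt (G x) - Real.sqrt (G y.val)) ^ 2 := by
    intro x
    rw [hw, ← tsum_mul_left, ← tsum_mul_left, ← tsum_div_const,
      ← Summable.tsum_add (Summable.of_finite) (Summable.of_finite)]
    refine tsum_congr fun y => ?_
    have h1 := hsq x
    have h2 := hsq y.val
    have h3 := hsp x
    generalize Real.sqrt (G x) = a at *
    generalize Real.sqrt (G y.val) = b at *
    rw [← h1, ← h2]
    field_simp
    ring
  have hw0 : ∀ x, 0 ≤ w x := by
    intro x
    rw [key x]
    have h1 : 0 ≤ 1 / (2 * G x) := by have := hGpos x; positivity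
    exact add_nonneg (mul_nonneg h1 (hGsuper x))
      (mul_nonneg h1 (tsum_nonneg fun y => sq_nonneg _))
  refine ⟨hw0, ?_, ?_⟩
  · intro φ hφ
    let e : (Σ x : X, {y : X // Adj x y}) ≃ {p : X × X // Adj p.1 p.2} :=
      { toFun := fun q => ⟨(q.1, q.2.1), q.2.2⟩
        invFun := fun p => ⟨p.1.1, ⟨p.1.2, p.2⟩⟩
        left_inv := fun q => rfl
        right_inv := fun p => rfl }
    let sw : {p : X × X // Adj p.1 p.2} ≃ {p : X × X // Adj p.1 p.2} :=
      { toFun := fun p => ⟨(p.1.2, p.1.1), hsymm _ _ p.2⟩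
        invFun := fun p => ⟨(p.1.2, p.1.1), hsymm _ _ p.2⟩
        left_inv := fun q => rfl
        right_inv := fun p => rfl }
    have hT : {p : {p : X × X // Adj p.1 p.2} | φ p.val.1 ≠ 0}.Finite := by
      refine (hφ.biUnion fun x _ =>
        Set.finite_range (fun y : {y : X // Adj x y} => e ⟨x, y⟩)).subset ?_
      intro p hp
      exact Set.mem_biUnion (x := p.1.1) hp ⟨⟨p.1.2, p.2⟩, rfl⟩
    have hT2 : {p : {p : X × X // Adj p.1 p.2} | φ p.val.2 ≠ 0}.Finite := by
      refine (hT.image sw).subset ?_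
      intro p hp
      exact ⟨sw p, hp, rfl⟩
    let f : {p : X × X // Adj p.1 p.2} → ℝ := fun p =>
      φ p.val.1 ^ 2 * ((Real.sqrt (G p.val.1) - Real.sqrt (G p.val.2)) / Real.sqrt (G p.val.1))
    have hfs : Summable f := by
      refine summable_of_hasFiniteSupport (hT.subset ?_)
      intro p hp h0
      exact hp (by simp [f, h0])
    have hfs2 : Summable (fun p => f (sw p)) := sw.summable_iff.2 hfs
    have hL : Summable (fun p : {p : X × X // Adj p.1 p.2} =>
        (φ p.val.1 - φ p.val.2) ^ 2) := by
      refine summable_of_hasFiniteSupport ((hT.union hT2).subset ?_)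
      intro p hp
      by_contra hc
      simp only [Set.mem_union, Set.mem_ofPred_eq, not_or, not_not] at hc
      exact hp (by simp [hc.1, hc.2])
    have hfw : ∑' p, f p = ∑' x : X, w x * φ x ^ 2 := by
      have hes : Summable (fun q => f (e q)) := e.summable_iff.2 hfs
      rw [← e.tsum_eq, hes.tsum_sigma]
      refine tsum_congr fun x => ?_
      rw [hw, ← tsum_div_const, ← tsum_mul_right]
      exact tsum_congr fun y => mul_comm _ _
    have hnn : 0 ≤ ∑' x : X, w x * φ x ^ 2 :=
      tsum_nonneg fun x => mul_nonneg (hw0 x) (sq_nonneg _)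
    have hle : ∑' p, (f p + f (sw p)) ≤
        ∑' p : {p : X × X // Adj p.1 p.2}, (φ p.val.1 - φ p.val.2) ^ 2 := by
      refine Summable.tsum_le_tsum (fun p => ?_) (hfs.add hfs2) hL
      change φ p.val.1 ^ 2 * ((Real.sqrt (G p.val.1) - Real.sqrt (G p.val.2)) /
          Real.sqrt (G p.val.1)) + φ p.val.2 ^ 2 *
          ((Real.sqrt (G p.val.2) - Real.sqrt (G p.val.1)) / Real.sqrt (G p.val.2)) ≤ _
      have h1 := hsp p.val.1
      have h2 := hsp p.val.2
      generalize Real.sqrt (G p.val.1) = a at *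
      generalize Real.sqrt (G p.val.2) = b at *
      generalize φ p.val.1 = s
      generalize φ p.val.2 = t
      have h3 : (s - t) ^ 2 - (s ^ 2 * ((a - b) / a) + t ^ 2 * ((b - a) / b)) =
          (s * b - t * a) ^ 2 / (a * b) := by
        field_simp
        ring
      have h4 : 0 ≤ (s * b - t * a) ^ 2 / (a * b) := by positivity
      linarith
    rw [Summable.tsum_add hfs hfs2, sw.tsum_eq f, hfw] at hle
    linarith
  · intro x hx
    rw [key x, hGharm x hx, mul_zero, zero_add]
end

section
/- Let b be a connected graph over a countably infinite set X, let q : X → ℝ be a potential, and let u, v ∈ F(X) be strictly positive functions that are H-superharmonic on X and H-harmonic outside a finite set. Assume (a) u₀ := u/v is proper as a map X → (0,∞), and (b) sup_{x∼y} u₀(x)/u₀(y) < ∞. Then (uv)^{1/2} ∈ F(X); the function w := H[(uv)^{1/2}] / (uv)^{1/2} is nonnegative; for every finitely supported φ : X → ℝ one has h(φ) ≥ Σ_{x∈X} w(x)·φ(x)²; and for every x ∈ X with Hu(x) = Hv(x) = 0, w(x) = (1/2)·Σ_{y∈X} b(x,y)·[(u(y)/u(x))^{1/2} − (v(y)/v(x))^{1/2}]².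 -/
/-- `f` belongs to `F(X)`: `∑_y b x y |f y| < ∞` for every `x`. -/
def memF {X : Type} (b : X → X → ℝ) (f : X → ℝ) : Prop :=
  ∀ x : X, Summable fun y => b x y * |f y|

/-- The formal graph Laplacian `L f x = ∑_y b x y (f x - f y)`. -/
noncomputable def lap {X : Type} (b : X → X → ℝ) (f : X → ℝ) (x : X) : ℝ :=
  ∑' y : X, b x y * (f x - f y)

/-- The formal Schrödinger operator `H = L + q`. -/
noncomputable def schrod {X : Type} (b : X → X → ℝ) (q : X → ℝ) (f : X → ℝ) (x : X) : ℝ :=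
  lap b f x + q x * f x

/-- The quadratic form `h(φ)` of `H = L + q`. -/
noncomputable def quadForm {X : Type} (b : X → X → ℝ) (q : X → ℝ) (φ : X → ℝ) : ℝ :=
  (1 / 2) * (∑' p : X × X, b p.1 p.2 * (φ p.1 - φ p.2) ^ 2) + ∑' x : X, q x * φ x ^ 2

theorem aux_prod {X : Type} (f : X → ℝ) (hf : (Function.support f).Finite) (g : X → X → ℝ)
    (hg : ∀ x, Summable (g x)) :
    Summable (fun p : X × X => f p.1 * g p.1 p.2) ∧
    ∑' p : X × X, f p.1 * g p.1 p.2 = ∑' x, f x * ∑' y, g x y := by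
  have hs : Summable (fun p : X × X => f p.1 * g p.1 p.2) := by
    apply Summable.of_abs
    rw [summable_prod_of_nonneg (fun p => abs_nonneg _)]
    refine ⟨fun x => ((hg x).mul_left (f x)).abs, ?_⟩
    refine summable_of_hasFiniteSupport (hf.subset ?_)
    intro x hx hfx
    apply hx
    simp [hfx]
  refine ⟨hs, ?_⟩
  rw [hs.tsum_prod' (fun x => (hg x).mul_left (f x))]
  refine tsum_congr fun x => ?_
  exact (tsum_mul_left (f := g x) (a := f x))

theorem aux_amgm (a c s t : ℝ) (hs : 0 < s) (ht : 0 < t) :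
    a ^ 2 * (1 - t / s) + c ^ 2 * (1 - s / t) ≤ (a - c) ^ 2 := by
  have h : (a - c) ^ 2 - (a ^ 2 * (1 - t / s) + c ^ 2 * (1 - s / t))
      = (a * t - c * s) ^ 2 / (s * t) := by
    field_simp
    ring
  have : 0 ≤ (a * t - c * s) ^ 2 / (s * t) := by positivity
  linarith

theorem aux_sum {X : Type} (b : X → X → ℝ) (hb_row : ∀ x, Summable fun y => b x y)
    (f : X → ℝ) (hf : memF b f) (hpos : ∀ x, 0 < f x) (x : X) :
    Summable (fun y => b x y * (1 - f y / f x)) := by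
  have h1 : Summable (fun y => b x y * f y) := by
    refine (hf x).congr fun y => ?_
    rw [abs_of_pos (hpos y)]
  refine ((hb_row x).sub (h1.div_const (f x))).congr fun y => ?_
  ring

theorem aux_schrod {X : Type} (b : X → X → ℝ) (q : X → ℝ)
    (f : X → ℝ) (hpos : ∀ x, 0 < f x) (x : X) :
    schrod b q f x / f x = ∑' y, b x y * (1 - f y / f x) + q x := by
  have h := (hpos x).ne'
  unfold schrod lap
  rw [add_div, mul_div_cancel_right₀ _ h, ← tsum_div_const]
  congr 1
  refine tsum_congr fun y => ?_
  field_simp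

theorem aux_form {X : Type} (b : X → X → ℝ) (q : X → ℝ)
    (hb_nonneg : ∀ x y, 0 ≤ b x y) (hb_symm : ∀ x y, b x y = b y x)
    (hb_row : ∀ x, Summable fun y => b x y)
    (f : X → ℝ) (hf : memF b f) (hpos : ∀ x, 0 < f x)
    (φ : X → ℝ) (hφ : (Function.support φ).Finite) :
    ∑' x, schrod b q f x / f x * φ x ^ 2 ≤ quadForm b q φ := by
  have hφ2 : (Function.support fun x => φ x ^ 2).Finite := by
    refine hφ.subset ?_
    intro x hx h
    apply hx
    simp [h]
  obtain ⟨hG, hGe⟩ := aux_prod (fun x => φ x ^ 2) hφ2 (fun x y => b x y * (1 - f y / f x))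
    (aux_sum b hb_row f hf hpos)
  obtain ⟨hB, -⟩ := aux_prod (fun x => φ x ^ 2) hφ2 b hb_row
  have hG' := (Equiv.prodComm X X).summable_iff.mpr hG
  have hGe' := (Equiv.prodComm X X).tsum_eq
    (fun p : X × X => φ p.1 ^ 2 * (b p.1 p.2 * (1 - f p.2 / f p.1)))
  have hB' := (Equiv.prodComm X X).summable_iff.mpr hB
  have hE : Summable (fun p : X × X => b p.1 p.2 * (φ p.1 - φ p.2) ^ 2) := by
    refine Summable.of_nonneg_of_le (fun p => mul_nonneg (hb_nonneg _ _) (sq_nonneg _)) ?_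
      ((hB.add hB').mul_left 2)
    rintro ⟨x, y⟩
    simp only [Function.comp, Equiv.prodComm_apply, Prod.swap]
    rw [hb_symm y x]
    nlinarith [mul_nonneg (hb_nonneg x y) (sq_nonneg (φ x + φ y))]
  have hle : ∑' p : X × X, φ p.1 ^ 2 * (b p.1 p.2 * (1 - f p.2 / f p.1)) +
      ∑' p : X × X, φ p.1 ^ 2 * (b p.1 p.2 * (1 - f p.2 / f p.1)) ≤
      ∑' p : X × X, b p.1 p.2 * (φ p.1 - φ p.2) ^ 2 := by
    nth_rewrite 2 [← hGe']
    refine le_trans (le_of_eq (hG.tsum_add hG').symm) ?_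
    refine (hG.add hG').tsum_le_tsum ?_ hE
    rintro ⟨x, y⟩
    simp only [Function.comp, Equiv.prodComm_apply, Prod.swap]
    rw [hb_symm y x]
    have := mul_le_mul_of_nonneg_left
      (aux_amgm (φ x) (φ y) (f x) (f y) (hpos x) (hpos y)) (hb_nonneg x y)
    linarith
  have hfin : ∀ k : X → ℝ, Summable fun x => k x * φ x ^ 2 := by
    intro k
    refine summable_of_hasFiniteSupport (hφ.subset ?_)
    intro x hx h
    apply hx
    simp [h]
  have hsum : ∑' x, schrod b q f x / f x * φ x ^ 2 =
      ∑' x, φ x ^ 2 * ∑' y, b x y * (1 - f y / f x) + ∑' x, q x * φ x ^ 2 := by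
    rw [← Summable.tsum_add _ (hfin q)]
    · refine tsum_congr fun x => ?_
      rw [aux_schrod b q f hpos]
      ring
    · exact (hfin fun x => ∑' y, b x y * (1 - f y / f x)).congr fun x => mul_comm _ _
  rw [hsum]
  unfold quadForm
  linarith

theorem aux_point (a c a' c' : ℝ) (ha : 0 < a) (hc : 0 < c) (ha' : 0 < a') (hc' : 0 < c') :
    1 - √(a' * c') / √(a * c) = (1 / 2) * (1 - a' / a) + (1 / 2) * (1 - c' / c) +
      (1 / 2) * (√(a' / a) - √(c' / c)) ^ 2 := by
  have h1 : √(a' / a) ^ 2 = a' / a := Real.sq_sqrt (by positivity)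
  have h2 : √(c' / c) ^ 2 = c' / c := Real.sq_sqrt (by positivity)
  have h3 : √(a' * c') / √(a * c) = √(a' / a) * √(c' / c) := by
    rw [← Real.sqrt_div (by positivity), ← Real.sqrt_mul (by positivity)]
    congr 1
    field_simp
  rw [h3]
  linear_combination (-1 / 2) * h1 + (-1 / 2) * h2

/-- the supersolution construction yields a Hardy weight. -/
theorem stmt2 (X : Type) [Countable X] [Infinite X]
    (b : X → X → ℝ) (q : X → ℝ)
    (hb_nonneg : ∀ x y, 0 ≤ b x y) (hb_symm : ∀ x y, b x y = b y x)
    (hb_diag : ∀ x, b x x = 0) (hb_row : ∀ x, Summable fun y => b x y)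
    (hconn : ∀ x y : X, Relation.ReflTransGen (fun a c => 0 < b a c) x y)
    (u v : X → ℝ) (hu_mem : memF b u) (hv_mem : memF b v)
    (hu_pos : ∀ x, 0 < u x) (hv_pos : ∀ x, 0 < v x)
    (hu_super : ∀ x, 0 ≤ schrod b q u x) (hv_super : ∀ x, 0 ≤ schrod b q v x)
    (K : Set X) (hK : K.Finite)
    (hu_harm : ∀ x ∉ K, schrod b q u x = 0) (hv_harm : ∀ x ∉ K, schrod b q v x = 0)
    (hproper : ∀ I : Set ℝ, IsCompact I → I ⊆ Set.range (fun x => u x / v x) →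
      ((fun x => u x / v x) ⁻¹' I).Finite)
    (hosc : ∃ C : ℝ, ∀ x y, 0 < b x y → (u x / v x) / (u y / v y) ≤ C)
    (w : X → ℝ)
    (hw : ∀ x, w x = schrod b q (fun z => Real.sqrt (u z * v z)) x / Real.sqrt (u x * v x)) :
    memF b (fun z => Real.sqrt (u z * v z)) ∧
    (∀ x, 0 ≤ w x) ∧
    (∀ φ : X → ℝ, (Function.support φ).Finite →
      quadForm b q φ ≥ ∑' x : X, w x * φ x ^ 2) ∧
    (∀ x, schrod b q u x = 0 → schrod b q v x = 0 →
      w x = (1 / 2) * ∑' y : X, b x y *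
        (Real.sqrt (u y / u x) - Real.sqrt (v y / v x)) ^ 2) := by
  have hs_pos : ∀ x, 0 < (fun z => Real.sqrt (u z * v z)) x := fun x =>
    Real.sqrt_pos.mpr (mul_pos (hu_pos x) (hv_pos x))
  have hs_mem : memF b (fun z => Real.sqrt (u z * v z)) := by
    intro x
    refine Summable.of_nonneg_of_le (fun y => mul_nonneg (hb_nonneg _ _) (abs_nonneg _)) ?_
      ((hu_mem x).add (hv_mem x))
    intro y
    rw [← mul_add]
    refine mul_le_mul_of_nonneg_left ?_ (hb_nonneg x y)
    have h1 := hu_pos y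
    have h2 := hv_pos y
    rw [abs_of_pos (hs_pos y), abs_of_pos h1, abs_of_pos h2]
    apply Real.sqrt_le_iff.mpr
    constructor
    · positivity
    · nlinarith [mul_pos h1 h2]
  have key : ∀ x, w x = (1 / 2) * (schrod b q u x / u x) + (1 / 2) * (schrod b q v x / v x) +
      (1 / 2) * ∑' y : X, b x y * (Real.sqrt (u y / u x) - Real.sqrt (v y / v x)) ^ 2 := by
    intro x
    have hU := aux_sum b hb_row u hu_mem hu_pos x
    have hV := aux_sum b hb_row v hv_mem hv_pos x
    have hS := aux_sum b hb_row _ hs_mem hs_pos x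
    have hw' := (hw x).trans (aux_schrod b q _ hs_pos x)
    rw [hw', aux_schrod b q u hu_pos x, aux_schrod b q v hv_pos x]
    have e : ∀ y, b x y * (Real.sqrt (u y / u x) - Real.sqrt (v y / v x)) ^ 2 =
        2 * (b x y * (1 - Real.sqrt (u y * v y) / Real.sqrt (u x * v x))) -
        (b x y * (1 - u y / u x) + b x y * (1 - v y / v x)) := by
      intro y
      rw [aux_point (u x) (v x) (u y) (v y) (hu_pos x) (hv_pos x) (hu_pos y) (hv_pos y)]
      ring
    rw [tsum_congr e, (hS.mul_left 2).tsum_sub (hU.add hV), hU.tsum_add hV, tsum_mul_left]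
    ring
  refine ⟨hs_mem, ?_, ?_, ?_⟩
  · intro x
    rw [key x]
    have h1 := div_nonneg (hu_super x) (hu_pos x).le
    have h2 := div_nonneg (hv_super x) (hv_pos x).le
    have h3 : 0 ≤ ∑' y : X, b x y * (Real.sqrt (u y / u x) - Real.sqrt (v y / v x)) ^ 2 :=
      tsum_nonneg fun y => mul_nonneg (hb_nonneg x y) (sq_nonneg _)
    linarith
  · intro φ hφ
    have h := aux_form b q hb_nonneg hb_symm hb_row _ hs_mem hs_pos φ hφ
    refine le_trans (le_of_eq ?_) h
    exact tsum_congr fun x => by rw [hw x]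
  · intro x h1 h2
    rw [key x, h1, h2]
    simp
end

section
/- Let b be a connected graph over a countably infinite set X and let q : X → ℝ be a potential. Let u, v : X → ℝ be such that u and v − u are strictly positive functions in F(X) that are H-superharmonic on X and H-harmonic outside a finite set. Set u₀ := u/v and assume (a) u₀ is proper as a map X → (0,1) with sup u₀ = 1, and (b) sup_{x∼y} [u₀(x)(1 − u₀(y))] / [u₀(y)(1 − u₀(x))] < ∞. Set w := H[(u(v−u))^{1/2}] / (u(v−u))^{1/2}. Then w is an optimal Hardy weight for h in X: (i) h(φ) ≥ Σ_x w(x)φ(x)² for every finitely supported φ and there is no w̃ : X → [0,∞), w̃ ≠ 0, with h(φ) ≥ Σ_x (w(x)+w̃(x))φ(x)² for all finitely supported φ; (ii) Σ_{x∈X} u(x)·(v−u)(x)·w(x) = ∞; (iii) for every λ > 0 and every finite W ⊆ X there is a finitely supported φ supported in X∖W with h(φ) < (1+λ)Σ_x w(x)φ(x)². Moreover, w(x) = (1/2)Σ_{y∈X} b(x,y)[(u(y)/u(x))^{1/2} − ((v−u)(y)/(v−u)(x))^{1/2}]² for all x with Hu(x) = Hv(x) = 0. -/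
namespace Opt
variable {X : Type}

lemma fin_pairs (b : X → X → ℝ) (hs : ∀ x y, b x y = b y x)
    (hlf : ∀ x, {y | b x y ≠ 0}.Finite) (S : Set X) (hS : S.Finite) :
    {p : X × X | b p.1 p.2 ≠ 0 ∧ (p.1 ∈ S ∨ p.2 ∈ S)}.Finite := by
  have h1 : (⋃ x ∈ S, (fun y => (x, y)) '' {y | b x y ≠ 0}).Finite :=
    hS.biUnion (fun x _ => (hlf x).image _)
  have h2 : (⋃ x ∈ S, (fun y => (y, x)) '' {y | b x y ≠ 0}).Finite :=
    hS.biUnion (fun x _ => (hlf x).image _)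
  refine (h1.union h2).subset ?_
  rintro ⟨x, y⟩ ⟨hb, h | h⟩
  · left
    simp only [Set.mem_iUnion]
    exact ⟨x, h, y, hb, rfl⟩
  · right
    simp only [Set.mem_iUnion]
    exact ⟨y, h, x, by simpa [hs y x] using hb, rfl⟩

lemma summ_pairs (b : X → X → ℝ) (hs : ∀ x y, b x y = b y x)
    (hlf : ∀ x, {y | b x y ≠ 0}.Finite) (S : Set X) (hS : S.Finite) (G : X × X → ℝ)
    (h1 : ∀ p, b p.1 p.2 = 0 → G p = 0) (h2 : ∀ p, p.1 ∉ S → p.2 ∉ S → G p = 0) :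
    Summable G := by
  apply summable_of_hasFiniteSupport
  refine (fin_pairs b hs hlf S hS).subset ?_
  intro p hp
  refine ⟨fun h => hp (h1 p h), ?_⟩
  by_contra h
  push Not at h
  exact hp (h2 p h.1 h.2)

lemma green (b : X → X → ℝ) (hs : ∀ x y, b x y = b y x)
    (hlf : ∀ x, {y | b x y ≠ 0}.Finite) (A : X → X → ℝ) (hA : ∀ x y, A x y = - A y x)
    (hAb : ∀ x y, b x y = 0 → A x y = 0) (F : X → ℝ) (hF : (Function.support F).Finite) :
    ∑' p : X × X, A p.1 p.2 * (F p.1 - F p.2) = 2 * ∑' x, F x * ∑' y, A x y := by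
  have s1 : Summable (fun p : X × X => F p.1 * A p.1 p.2) := by
    refine summ_pairs b hs hlf _ hF _ (fun p hp => by simp [hAb _ _ hp]) (fun p h _ => ?_)
    simp only [Function.mem_support, not_not] at h
    simp [h]
  have s2 : Summable (fun p : X × X => F p.2 * A p.1 p.2) := by
    refine summ_pairs b hs hlf _ hF _ (fun p hp => by simp [hAb _ _ hp]) (fun p _ h => ?_)
    simp only [Function.mem_support, not_not] at h
    simp [h]
  have e1 : ∑' p : X × X, F p.1 * A p.1 p.2 = ∑' x, F x * ∑' y, A x y := by
    rw [s1.tsum_prod]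
    simp only [tsum_mul_left]
  have e2 : ∑' p : X × X, F p.2 * A p.1 p.2 = - ∑' p : X × X, F p.1 * A p.1 p.2 := by
    rw [← (Equiv.prodComm X X).tsum_eq, ← tsum_neg]
    refine tsum_congr (fun p => ?_)
    simp only [Equiv.prodComm_apply, Prod.fst_swap, Prod.snd_swap]
    rw [hA p.2 p.1]; ring
  have : ∑' p : X × X, A p.1 p.2 * (F p.1 - F p.2)
      = ∑' p : X × X, F p.1 * A p.1 p.2 - ∑' p : X × X, F p.2 * A p.1 p.2 := by
    rw [← s1.tsum_sub s2]
    exact tsum_congr (fun p => by ring)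
  rw [this, e2, e1]; ring

lemma ineq1 (P Q : ℝ) (hP : 0 < P) (hQ : 0 < Q) (hPQ : Q ≤ P) :
    Real.sqrt (P * Q) * (Real.log P - Real.log Q) ≤ P - Q := by
  obtain ⟨p, rfl⟩ : ∃ p, P = Real.exp p := ⟨Real.log P, (Real.exp_log hP).symm⟩
  obtain ⟨r, rfl⟩ : ∃ p, Q = Real.exp p := ⟨Real.log Q, (Real.exp_log hQ).symm⟩
  have hpr : r ≤ p := Real.exp_le_exp.1 hPQ
  rw [← Real.exp_add, ← Real.exp_half, Real.log_exp, Real.log_exp]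
  have h := Real.self_le_sinh_iff.2 (show (0:ℝ) ≤ (p - r) / 2 by linarith)
  have e : Real.exp p - Real.exp r = Real.exp ((p + r)/2) * (2 * Real.sinh ((p-r)/2)) := by
    rw [Real.sinh_eq]
    have h1 : Real.exp p = Real.exp ((p + r)/2) * Real.exp ((p-r)/2) := by
      rw [← Real.exp_add]; congr 1; ring
    have h2 : Real.exp r = Real.exp ((p + r)/2) * Real.exp (-((p-r)/2)) := by
      rw [← Real.exp_add]; congr 1; ring
    rw [h1, h2]; ring
  rw [e]
  apply mul_le_mul_of_nonneg_left _ (Real.exp_pos _).le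
  linarith

lemma ineq2 (P Q L : ℝ) (hP : 0 < P) (hQ : 0 < Q) (hPQ : Q ≤ P)
    (hL : Real.log P - Real.log Q ≤ L) :
    (P - Q) * (Real.log P - Real.log Q) ≤
      (4 * Real.exp L) * (Real.sqrt P - Real.sqrt Q) ^ 2 := by
  obtain ⟨p, rfl⟩ : ∃ p, P = Real.exp p := ⟨Real.log P, (Real.exp_log hP).symm⟩
  obtain ⟨r, rfl⟩ : ∃ p, Q = Real.exp p := ⟨Real.log Q, (Real.exp_log hQ).symm⟩
  have hpr : r ≤ p := Real.exp_le_exp.1 hPQ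
  rw [Real.log_exp, Real.log_exp] at *
  rw [← Real.exp_half, ← Real.exp_half]
  set A := Real.exp (p/2)
  set B := Real.exp (r/2)
  have hA : Real.exp p = A ^ 2 := by rw [← Real.exp_nat_mul]; congr 1; push_cast; ring
  have hB : Real.exp r = B ^ 2 := by rw [← Real.exp_nat_mul]; congr 1; push_cast; ring
  have hBp : 0 < B := Real.exp_pos _
  have hAB : A = B * Real.exp ((p-r)/2) := by
    change Real.exp (p/2) = Real.exp (r/2) * _
    rw [← Real.exp_add]; congr 1; ring
  have h0 : 1 ≤ Real.exp L := Real.one_le_exp (by linarith)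
  have h1 : (p - r)/2 + 1 ≤ Real.exp ((p-r)/2) := Real.add_one_le_exp _
  have h2 : Real.exp ((p-r)/2) ≤ Real.exp L := Real.exp_le_exp.2 (by linarith)
  rw [hA, hB, hAB]
  set E := Real.exp ((p-r)/2)
  have : (E ^ 2 - 1) * (p - r) ≤ 4 * Real.exp L * (E - 1)^2 := by
    have hE : 0 ≤ E - 1 := by linarith
    calc (E ^ 2 - 1) * (p - r) = (E - 1) * ((E + 1) * (p - r)) := by ring
      _ ≤ (E - 1) * ((2 * Real.exp L) * (2 * (E - 1))) := by
        apply mul_le_mul_of_nonneg_left _ hE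
        apply mul_le_mul <;> linarith
      _ = _ := by ring
  nlinarith [mul_le_mul_of_nonneg_left this (sq_nonneg B)]

lemma energy (b : X → X → ℝ) (q : X → ℝ) (hs : ∀ x y, b x y = b y x)
    (hlf : ∀ x, {y | b x y ≠ 0}.Finite) (ψ : X → ℝ) (hψ : ∀ x, 0 < ψ x)
    (e : X → ℝ) (he : (Function.support e).Finite) :
    quadForm b q (fun x => ψ x * e x) = ∑' x, schrod b q ψ x / ψ x * (ψ x * e x) ^ 2 +
      (1 / 2) * ∑' p : X × X, b p.1 p.2 * (ψ p.1 * ψ p.2) * (e p.1 - e p.2) ^ 2 := by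
  have hFs : (Function.support (fun x => ψ x * e x ^ 2)).Finite := by
    refine he.subset (fun x hx h => hx ?_)
    simp [h]
  have g := green b hs hlf (fun x y => b x y * (ψ x - ψ y))
    (fun x y => by rw [hs x y]; ring) (fun x y h => by simp [h])
    (fun x => ψ x * e x ^ 2) hFs
  have s1 : Summable (fun p : X × X => b p.1 p.2 * (ψ p.1 * ψ p.2) * (e p.1 - e p.2) ^ 2) := by
    refine summ_pairs b hs hlf _ he _ (fun p hp => by simp [hp]) (fun p h h' => ?_)
    simp only [Function.mem_support, not_not] at h h'
    simp [h, h']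
  have s2 : Summable (fun p : X × X => b p.1 p.2 * (ψ p.1 - ψ p.2) *
      (ψ p.1 * e p.1 ^ 2 - ψ p.2 * e p.2 ^ 2)) := by
    refine summ_pairs b hs hlf _ he _ (fun p hp => by simp [hp]) (fun p h h' => ?_)
    simp only [Function.mem_support, not_not] at h h'
    simp [h, h']
  have e1 : ∑' p : X × X, b p.1 p.2 * (ψ p.1 * e p.1 - ψ p.2 * e p.2) ^ 2 =
      ∑' p : X × X, b p.1 p.2 * (ψ p.1 * ψ p.2) * (e p.1 - e p.2) ^ 2 +
      ∑' p : X × X, b p.1 p.2 * (ψ p.1 - ψ p.2) *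
      (ψ p.1 * e p.1 ^ 2 - ψ p.2 * e p.2 ^ 2) := by
    rw [← s1.tsum_add s2]
    exact tsum_congr (fun p => by ring)
  have s3 : Summable (fun x => ψ x * e x ^ 2 * ∑' y, b x y * (ψ x - ψ y)) := by
    apply summable_of_hasFiniteSupport
    refine he.subset (fun x hx h => hx ?_)
    simp [h]
  have s4 : Summable (fun x => q x * (ψ x * e x) ^ 2) := by
    apply summable_of_hasFiniteSupport
    refine he.subset (fun x hx h => hx ?_)
    simp [h]
  have e2 : ∑' x, schrod b q ψ x / ψ x * (ψ x * e x) ^ 2 =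
      ∑' x, ψ x * e x ^ 2 * ∑' y, b x y * (ψ x - ψ y) + ∑' x, q x * (ψ x * e x) ^ 2 := by
    rw [← s3.tsum_add s4]
    refine tsum_congr (fun x => ?_)
    have := (hψ x).ne'
    unfold schrod lap
    field_simp
  unfold quadForm
  rw [e2, e1, g]; ring

lemma wform (b : X → X → ℝ) (q : X → ℝ)
    (hlf : ∀ x, {y | b x y ≠ 0}.Finite) (a c : X → ℝ) (ha : ∀ x, 0 < a x) (hc : ∀ x, 0 < c x)
    (x : X) :
    schrod b q (fun z => Real.sqrt (a z * c z)) x / Real.sqrt (a x * c x) =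
      (1 / 2) * (schrod b q a x / a x + schrod b q c x / c x) +
      (1 / 2) * ∑' y, b x y * (Real.sqrt (a y / a x) - Real.sqrt (c y / c x)) ^ 2 := by
  have sm : ∀ G : X → ℝ, Summable (fun y => b x y * G y) := by
    intro G
    apply summable_of_hasFiniteSupport
    refine (hlf x).subset (fun y hy h => hy ?_)
    simp [h]
  have hax := (ha x).ne'
  have hcx := (hc x).ne'
  have hpx : 0 < Real.sqrt (a x * c x) := Real.sqrt_pos.2 (mul_pos (ha x) (hc x))
  unfold schrod lap
  have l1 : (∑' y, b x y * (a x - a y)) / a x = ∑' y, b x y * (1 - a y / a x) := by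
    rw [← tsum_div_const]
    exact tsum_congr (fun y => by field_simp)
  have l2 : (∑' y, b x y * (c x - c y)) / c x = ∑' y, b x y * (1 - c y / c x) := by
    rw [← tsum_div_const]
    exact tsum_congr (fun y => by field_simp)
  have l3 : (∑' y, b x y * (Real.sqrt (a x * c x) - Real.sqrt (a y * c y))) / Real.sqrt (a x * c x)
      = ∑' y, b x y * (1 - Real.sqrt (a y / a x) * Real.sqrt (c y / c x)) := by
    rw [← tsum_div_const]
    refine tsum_congr (fun y => ?_)
    have : Real.sqrt (a y / a x) * Real.sqrt (c y / c x)
        = Real.sqrt (a y * c y) / Real.sqrt (a x * c x) := by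
      rw [← Real.sqrt_mul (div_pos (ha y) (ha x)).le, ← Real.sqrt_div (mul_pos (ha y) (hc y)).le]
      congr 1; field_simp
    rw [this]
    field_simp
  have l4 : ∑' y, b x y * (1 - Real.sqrt (a y / a x) * Real.sqrt (c y / c x)) =
      (1/2) * (∑' y, b x y * (1 - a y / a x) + ∑' y, b x y * (1 - c y / c x)) +
      (1 / 2) * ∑' y, b x y * (Real.sqrt (a y / a x) - Real.sqrt (c y / c x)) ^ 2 := by
    rw [← (sm _).tsum_add (sm _), ← mul_add, ← Summable.tsum_add _ (sm _), ← tsum_mul_left]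
    · refine tsum_congr (fun y => ?_)
      have h1 := Real.sq_sqrt (div_pos (ha y) (ha x)).le
      have h2 := Real.sq_sqrt (div_pos (hc y) (hc x)).le
      linear_combination (-b x y / 2) * h1 + (-b x y / 2) * h2
    · exact (sm _).add (sm _)
  rw [add_div, add_div, add_div, l1, l2, l3, l4]
  field_simp
  ring

/-- clamp -/
noncomputable def cl (α β t : ℝ) : ℝ := max α (min t β)

lemma cl_low {α β t : ℝ} (_h : α ≤ β) (ht : t ≤ α) : cl α β t = α := by
  unfold cl; exact max_eq_left ((min_le_left _ _).trans ht)
lemma cl_high {α β t : ℝ} (h : α ≤ β) (ht : β ≤ t) : cl α β t = β := by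
  unfold cl; rw [min_eq_right ht, max_eq_right h]
lemma cl_mono (α β : ℝ) : Monotone (cl α β) := by
  intro s t h; unfold cl; exact max_le_max le_rfl (min_le_min h le_rfl)
lemma cl_lip (α β : ℝ) {s t : ℝ} (h : s ≤ t) : cl α β t - cl α β s ≤ t - s := by
  unfold cl
  rcases max_cases α (min t β) with h1 | h1 <;> rcases max_cases α (min s β) with h2 | h2 <;>
  rcases min_cases t β with h3 | h3 <;> rcases min_cases s β with h4 | h4 <;> linarith

/-- log quotient -/
noncomputable def lg (a c : X → ℝ) (x : X) : ℝ := Real.log (a x) - Real.log (c x)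

/-- current -/
noncomputable def cur (b : X → X → ℝ) (a c : X → ℝ) (x y : X) : ℝ := b x y * (a x * c y - c x * a y)

/-- mixed energy -/
noncomputable def men (b : X → X → ℝ) (a c : X → ℝ) (f : X → ℝ) : ℝ :=
  ∑' p : X × X, cur b a c p.1 p.2 * (f p.1 - f p.2)

/-- the standing assumptions -/
structure Setup (b : X → X → ℝ) (a c : X → ℝ) (K : Set X) (L : ℝ) : Prop where
  nn : ∀ x y, 0 ≤ b x y
  sy : ∀ x y, b x y = b y x
  lf : ∀ x, {y | b x y ≠ 0}.Finite
  ap : ∀ x, 0 < a x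
  cp : ∀ x, 0 < c x
  Kf : K.Finite
  harm : ∀ x ∉ K, ∑' y, cur b a c x y = 0
  fin : ∀ α β, {x | α ≤ lg a c x ∧ lg a c x ≤ β}.Finite
  lip : ∀ x y, b x y ≠ 0 → lg a c x - lg a c y ≤ L
  sup : ∀ R, ∃ x, R < lg a c x
  conn : ∀ x y : X, Relation.ReflTransGen (fun a c => 0 < b a c) x y

namespace Setup
variable {b : X → X → ℝ} {a c : X → ℝ} {K : Set X} {L : ℝ}

lemma cl_eq (S : Setup b a c K L) {α β : ℝ} (h : α ≤ β) {x y : X} (hb : b x y ≠ 0)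
    (hx : ¬ (α - L ≤ lg a c x ∧ lg a c x ≤ β + L)) :
    cl α β (lg a c x) = cl α β (lg a c y) := by
  have h1 := S.lip x y hb
  have h2 := S.lip y x (by rwa [S.sy y x])
  rw [not_and_or, not_le, not_le] at hx
  rcases hx with hx | hx
  · rw [cl_low h (by linarith), cl_low h (by linarith)]
  · rw [cl_high h (by linarith), cl_high h (by linarith)]

lemma summ_cl (S : Setup b a c K L) {α β : ℝ} (h : α ≤ β) :
    Summable (fun p : X × X => cur b a c p.1 p.2 * (cl α β (lg a c p.1) - cl α β (lg a c p.2))) := by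
  refine summ_pairs b S.sy S.lf _ (S.fin (α - L) (β + L)) _ (fun p hp => by simp [cur, hp])
    (fun p h1 _ => ?_)
  by_cases hb : b p.1 p.2 = 0
  · simp [cur, hb]
  · rw [S.cl_eq h hb h1]; simp

lemma men_zero (S : Setup b a c K L) (F : X → ℝ) (hF : (Function.support F).Finite)
    (hK : ∀ x ∈ K, F x = 0) : men b a c F = 0 := by
  unfold men
  rw [green b S.sy S.lf (cur b a c) (fun x y => by unfold cur; rw [S.sy x y]; ring)
    (fun x y h => by simp [cur, h]) F hF]
  have : ∀ x, F x * ∑' y, cur b a c x y = 0 := by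
    intro x
    by_cases h : x ∈ K
    · simp [hK x h]
    · simp [S.harm x h]
  simp [this]

lemma men_lin (S : Setup b a c K L) {α β α' β' : ℝ} (h : α ≤ β) (h' : α' ≤ β') (k m : ℝ)
    (γ δ : ℝ) (hF : ∀ x, lg a c x ∉ Set.Icc γ δ →
      cl α β (lg a c x) - k * cl α' β' (lg a c x) - m = 0)
    (hK : ∀ x ∈ K, cl α β (lg a c x) - k * cl α' β' (lg a c x) - m = 0) :
    men b a c (fun x => cl α β (lg a c x)) = k * men b a c (fun x => cl α' β' (lg a c x)) := by
  have h0 := S.men_zero (fun x => cl α β (lg a c x) - k * cl α' β' (lg a c x) - m)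
    ((S.fin γ δ).subset (fun x hx => by
      by_contra hh
      exact hx (hF x hh))) hK
  unfold men at h0 ⊢
  rw [← sub_eq_zero, ← h0, ← tsum_mul_left, ← (S.summ_cl h).tsum_sub ((S.summ_cl h').mul_left k)]
  exact tsum_congr (fun p => by ring)

lemma men_up (S : Setup b a c K L) {R α β : ℝ} (hR : ∀ x ∈ K, lg a c x ≤ R)
    (hα : R ≤ α) (h : α ≤ β) :
    men b a c (fun x => cl α β (lg a c x)) =
      (β - α) * men b a c (fun x => cl R (R+1) (lg a c x)) := by
  refine S.men_lin h (by linarith) _ (α - (β - α) * R) R (max β (R+1)) ?_ ?_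
  · intro x hx
    rw [Set.mem_Icc, not_and_or, not_le, not_le] at hx
    rcases hx with hx | hx
    · rw [cl_low h (by linarith), cl_low (by linarith) hx.le]; ring
    · rw [max_lt_iff] at hx
      rw [cl_high h hx.1.le, cl_high (by linarith) hx.2.le]; ring
  · intro x hx
    have := hR x hx
    rw [cl_low h (by linarith), cl_low (by linarith) this]; ring

lemma men_down (S : Setup b a c K L) {R α β : ℝ} (hR : ∀ x ∈ K, R ≤ lg a c x)
    (hα : β ≤ R) (h : α ≤ β) :
    men b a c (fun x => cl α β (lg a c x)) =
      (β - α) * men b a c (fun x => cl (R-1) R (lg a c x)) := by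
  refine S.men_lin h (by linarith) _ (β - (β - α) * R) (min α (R-1)) R ?_ ?_
  · intro x hx
    rw [Set.mem_Icc, not_and_or, not_le, not_le] at hx
    rcases hx with hx | hx
    · rw [lt_min_iff] at hx
      rw [cl_low h hx.1.le, cl_low (by linarith) hx.2.le]; ring
    · rw [cl_high h (by linarith), cl_high (by linarith) hx.le]; ring
  · intro x hx
    have := hR x hx
    rw [cl_high h (by linarith), cl_high (by linarith) this]; ring

lemma cl_cur_aux (S : Setup b a c K L) (α β : ℝ) (x y : X) (hxy : lg a c y ≤ lg a c x) :
    Real.sqrt (a x * c x) * Real.sqrt (a y * c y) *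
      (cl α β (lg a c x) - cl α β (lg a c y)) ^ 2 ≤
      (a x * c y - c x * a y) * (cl α β (lg a c x) - cl α β (lg a c y)) := by
  have hax := S.ap x
  have hay := S.ap y
  have hcx := S.cp x
  have hcy := S.cp y
  have hP : 0 < a x * c y := by positivity
  have hQ : 0 < c x * a y := by positivity
  have hlog : Real.log (a x * c y) - Real.log (c x * a y) = lg a c x - lg a c y := by
    rw [Real.log_mul hax.ne' hcy.ne', Real.log_mul hcx.ne' hay.ne']; unfold lg; ring
  have hPQ : c x * a y ≤ a x * c y := by
    rw [← Real.log_le_log_iff hQ hP]; linarith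
  have h1 := ineq1 _ _ hP hQ hPQ
  rw [hlog] at h1
  have h2 := cl_lip α β hxy
  have h3 := cl_mono α β hxy
  have h4 : Real.sqrt (a x * c x) * Real.sqrt (a y * c y) =
      Real.sqrt (a x * c y * (c x * a y)) := by
    rw [← Real.sqrt_mul (by positivity)]; congr 1; ring
  rw [h4, sq, ← mul_assoc]
  apply mul_le_mul_of_nonneg_right _ (by linarith)
  exact (mul_le_mul_of_nonneg_left h2 (Real.sqrt_nonneg _)).trans h1

lemma cl_cur (S : Setup b a c K L) (α β : ℝ) (x y : X) :
    b x y * (Real.sqrt (a x * c x) * Real.sqrt (a y * c y)) *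
      (cl α β (lg a c x) - cl α β (lg a c y)) ^ 2 ≤
      cur b a c x y * (cl α β (lg a c x) - cl α β (lg a c y)) := by
  unfold cur
  rw [mul_assoc, mul_assoc (b x y)]
  apply mul_le_mul_of_nonneg_left _ (S.nn x y)
  rcases le_total (lg a c y) (lg a c x) with h | h
  · exact S.cl_cur_aux α β x y h
  · have := S.cl_cur_aux α β y x h
    linarith

lemma en_bound (S : Setup b a c K L) {α β α' β' : ℝ} (h : α ≤ β) (h' : α' ≤ β') (k k' : ℝ)
    (e : X → ℝ) (m : ℝ) (he : ∀ x, e x = m + k * cl α β (lg a c x) + k' * cl α' β' (lg a c x))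
    (hes : (Function.support e).Finite) :
    ∑' p : X × X, b p.1 p.2 * (Real.sqrt (a p.1 * c p.1) * Real.sqrt (a p.2 * c p.2)) *
      (e p.1 - e p.2) ^ 2 ≤ 2 * k ^ 2 * men b a c (fun x => cl α β (lg a c x)) +
        2 * k' ^ 2 * men b a c (fun x => cl α' β' (lg a c x)) := by
  unfold men
  rw [← tsum_mul_left, ← tsum_mul_left,
    ← ((S.summ_cl h).mul_left _).tsum_add ((S.summ_cl h').mul_left _)]
  refine Summable.tsum_le_tsum (fun p => ?_) ?_
    (((S.summ_cl h).mul_left _).add ((S.summ_cl h').mul_left _))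
  · have h1 := S.cl_cur α β p.1 p.2
    have h2 := S.cl_cur α' β' p.1 p.2
    have hB : 0 ≤ b p.1 p.2 * (Real.sqrt (a p.1 * c p.1) * Real.sqrt (a p.2 * c p.2)) :=
      mul_nonneg (S.nn _ _) (by positivity)
    set B := b p.1 p.2 * (Real.sqrt (a p.1 * c p.1) * Real.sqrt (a p.2 * c p.2))
    set d := cl α β (lg a c p.1) - cl α β (lg a c p.2) with hd
    set d' := cl α' β' (lg a c p.1) - cl α' β' (lg a c p.2) with hd'
    have e1 : e p.1 - e p.2 = k * d + k' * d' := by rw [he, he, hd, hd']; ring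
    rw [e1]
    have h3 : (k * d + k' * d') ^ 2 ≤ 2 * k ^ 2 * d ^ 2 + 2 * k' ^ 2 * d' ^ 2 := by
      nlinarith [sq_nonneg (k * d - k' * d')]
    have h4 := mul_le_mul_of_nonneg_left h3 hB
    have h5 := mul_le_mul_of_nonneg_left h1 (show 0 ≤ 2 * k ^ 2 by positivity)
    have h6 := mul_le_mul_of_nonneg_left h2 (show 0 ≤ 2 * k' ^ 2 by positivity)
    linarith
  · refine summ_pairs b S.sy S.lf _ hes _ (fun p hp => by simp [hp]) (fun p h1 h2 => ?_)
    simp only [Function.mem_support, not_not] at h1 h2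
    simp [h1, h2]

lemma cur_nonneg (S : Setup b a c K L) (α β : ℝ) (x y : X) :
    0 ≤ cur b a c x y * (cl α β (lg a c x) - cl α β (lg a c y)) :=
  le_trans (mul_nonneg (mul_nonneg (S.nn _ _) (by positivity)) (sq_nonneg _)) (S.cl_cur α β x y)

lemma men_nonneg (S : Setup b a c K L) (α β : ℝ) :
    0 ≤ men b a c (fun x => cl α β (lg a c x)) :=
  tsum_nonneg (fun p => S.cur_nonneg α β p.1 p.2)

lemma men_pos (S : Setup b a c K L) (R : ℝ) (x0 : X) (h0 : lg a c x0 ≤ R) :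
    0 < men b a c (fun x => cl R (R+1) (lg a c x)) := by
  obtain ⟨z, hz⟩ := S.sup R
  have key : ∃ x y, 0 < b x y ∧ lg a c x ≤ R ∧ R < lg a c y := by
    by_contra hcon
    push Not at hcon
    have : ∀ z', lg a c z' ≤ R := by
      intro z'
      have hp := S.conn x0 z'
      induction hp with
      | refl => exact h0
      | tail _ hab ih => exact hcon _ _ hab ih
    linarith [this z]
  obtain ⟨x, y, hb, hx, hy⟩ := key
  refine (S.summ_cl (show R ≤ R + 1 by linarith)).tsum_pos (fun p => S.cur_nonneg _ _ p.1 p.2)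
    (y, x) ?_
  have h1 := S.cl_cur R (R+1) y x
  refine lt_of_lt_of_le ?_ h1
  have hcl : R < cl R (R+1) (lg a c y) := by
    unfold cl; exact lt_max_of_lt_right (lt_min hy (by linarith))
  rw [cl_low (by linarith : R ≤ R+1) hx]
  have hax := S.ap x
  have hay := S.ap y
  have hcx := S.cp x
  have hcy := S.cp y
  have : 0 < cl R (R+1) (lg a c y) - R := by linarith
  rw [S.sy y x]
  positivity

lemma hw_aux (S : Setup b a c K L) (α β : ℝ) (x y : X) (hb : b x y ≠ 0)
    (hxy : lg a c y ≤ lg a c x) :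
    (a x * c y - c x * a y) * (cl α β (lg a c x) - cl α β (lg a c y)) ≤
      4 * Real.exp L * (Real.sqrt (a x * c y) - Real.sqrt (c x * a y)) ^ 2 := by
  have hax := S.ap x
  have hay := S.ap y
  have hcx := S.cp x
  have hcy := S.cp y
  have hP : 0 < a x * c y := by positivity
  have hQ : 0 < c x * a y := by positivity
  have hlog : Real.log (a x * c y) - Real.log (c x * a y) = lg a c x - lg a c y := by
    rw [Real.log_mul hax.ne' hcy.ne', Real.log_mul hcx.ne' hay.ne']; unfold lg; ring
  have hPQ : c x * a y ≤ a x * c y := by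
    rw [← Real.log_le_log_iff hQ hP]; linarith
  have h1 := ineq2 _ _ L hP hQ hPQ (by rw [hlog]; exact S.lip x y hb)
  rw [hlog] at h1
  refine le_trans ?_ h1
  exact mul_le_mul_of_nonneg_left (cl_lip α β hxy) (by linarith)

lemma hw_pt (S : Setup b a c K L) (α β : ℝ) (x y : X) :
    cur b a c x y * (cl α β (lg a c x) - cl α β (lg a c y)) ≤
      4 * Real.exp L * (a x * c x) *
        (b x y * (Real.sqrt (a y / a x) - Real.sqrt (c y / c x)) ^ 2) := by
  by_cases hb : b x y = 0
  · simp [cur, hb]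
  have hax := S.ap x
  have hay := S.ap y
  have hcx := S.cp x
  have hcy := S.cp y
  have e1 : Real.sqrt (a x * c x) * Real.sqrt (a y / a x) = Real.sqrt (c x * a y) := by
    rw [← Real.sqrt_mul (by positivity)]; congr 1; field_simp
  have e2 : Real.sqrt (a x * c x) * Real.sqrt (c y / c x) = Real.sqrt (a x * c y) := by
    rw [← Real.sqrt_mul (by positivity)]; congr 1; field_simp
  have e3 : (a x * c x) * (Real.sqrt (a y / a x) - Real.sqrt (c y / c x)) ^ 2 =
      (Real.sqrt (a x * c y) - Real.sqrt (c x * a y)) ^ 2 := by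
    rw [← e1, ← e2]
    have := Real.sq_sqrt (show 0 ≤ a x * c x by positivity)
    linear_combination (-(Real.sqrt (a y / a x) - Real.sqrt (c y / c x)) ^ 2) * this
  have key : (a x * c y - c x * a y) * (cl α β (lg a c x) - cl α β (lg a c y)) ≤
      4 * Real.exp L * (Real.sqrt (a x * c y) - Real.sqrt (c x * a y)) ^ 2 := by
    rcases le_total (lg a c y) (lg a c x) with h | h
    · exact S.hw_aux α β x y hb h
    · have := S.hw_aux α β y x (by rwa [S.sy y x]) h
      rw [mul_comm (a y), mul_comm (c y)] at this
      calc _ = (c x * a y - a x * c y) * (cl α β (lg a c y) - cl α β (lg a c x)) := by ring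
        _ ≤ _ := this
        _ = _ := by ring
  have := mul_le_mul_of_nonneg_left key (S.nn x y)
  rw [← e3] at this
  unfold cur
  calc _ = b x y * ((a x * c y - c x * a y) * (cl α β (lg a c x) - cl α β (lg a c y))) := by ring
    _ ≤ _ := this
    _ = _ := by ring

variable {q w : X → ℝ}

lemma w_low (S : Setup b a c K L) (hsa : ∀ x, 0 ≤ schrod b q a x)
    (hsc : ∀ x, 0 ≤ schrod b q c x)
    (hw : ∀ x, w x = schrod b q (fun z => Real.sqrt (a z * c z)) x / Real.sqrt (a x * c x))
    (α β : ℝ) (x : X) :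
    ∑' y, cur b a c x y * (cl α β (lg a c x) - cl α β (lg a c y)) ≤
      8 * Real.exp L * (a x * c x * w x) := by
  have hax := S.ap x
  have hcx := S.cp x
  have sm : ∀ G : X → ℝ, Summable (fun y => b x y * G y) := by
    intro G
    apply summable_of_hasFiniteSupport
    refine (S.lf x).subset (fun y hy h => hy ?_)
    simp [h]
  have h1 : ∑' y, cur b a c x y * (cl α β (lg a c x) - cl α β (lg a c y)) ≤
      4 * Real.exp L * (a x * c x) *
        ∑' y, b x y * (Real.sqrt (a y / a x) - Real.sqrt (c y / c x)) ^ 2 := by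
    rw [← tsum_mul_left]
    refine Summable.tsum_le_tsum (fun y => S.hw_pt α β x y) ?_ ((sm _).mul_left _)
    simp only [cur, mul_assoc]
    exact sm _
  refine h1.trans ?_
  rw [hw, wform b q S.lf a c S.ap S.cp x]
  have h2 : 0 ≤ 4 * Real.exp L * (a x * c x) * (schrod b q a x / a x + schrod b q c x / c x) :=
    mul_nonneg (by positivity) (add_nonneg (div_nonneg (hsa x) hax.le) (div_nonneg (hsc x) hcx.le))
  linarith

lemma w_nonneg (S : Setup b a c K L) (hsa : ∀ x, 0 ≤ schrod b q a x)
    (hsc : ∀ x, 0 ≤ schrod b q c x)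
    (hw : ∀ x, w x = schrod b q (fun z => Real.sqrt (a z * c z)) x / Real.sqrt (a x * c x))
    (x : X) : 0 ≤ w x := by
  rw [hw, wform b q S.lf a c S.ap S.cp x]
  have h1 := div_nonneg (hsa x) (S.ap x).le
  have h2 := div_nonneg (hsc x) (S.cp x).le
  have h3 : 0 ≤ ∑' y, b x y * (Real.sqrt (a y / a x) - Real.sqrt (c y / c x)) ^ 2 :=
    tsum_nonneg (fun y => mul_nonneg (S.nn _ _) (sq_nonneg _))
  linarith

lemma K_above (S : Setup b a c K L) (N : ℝ) : ∃ R, N ≤ R ∧ ∀ x ∈ K, lg a c x ≤ R := by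
  obtain ⟨R, hR⟩ := (S.Kf.image (lg a c)).bddAbove
  exact ⟨max N R, le_max_left _ _,
    fun x hx => (hR (Set.mem_image_of_mem _ hx)).trans (le_max_right _ _)⟩

lemma K_below (S : Setup b a c K L) : ∃ R, ∀ x ∈ K, R ≤ lg a c x := by
  obtain ⟨R, hR⟩ := (S.Kf.image (lg a c)).bddBelow
  exact ⟨R, fun x hx => hR (Set.mem_image_of_mem _ hx)⟩

open Classical in
lemma not_summ (S : Setup b a c K L) (hsa : ∀ x, 0 ≤ schrod b q a x)
    (hsc : ∀ x, 0 ≤ schrod b q c x)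
    (hw : ∀ x, w x = schrod b q (fun z => Real.sqrt (a z * c z)) x / Real.sqrt (a x * c x))
    (N : ℝ) :
    ¬ Summable (fun x => if N ≤ lg a c x then a x * c x * w x else 0) := by
  intro hsum
  obtain ⟨x0, -⟩ := S.sup 0
  obtain ⟨R, hR1, hR⟩ := S.K_above (max (N + L) (lg a c x0))
  have hδ := S.men_pos R x0 ((le_max_right _ _).trans hR1)
  have hNL : N + L ≤ R := (le_max_left _ _).trans hR1
  set δ := men b a c (fun x => cl R (R+1) (lg a c x))
  have key : ∀ n : ℕ, n * δ ≤ 8 * Real.exp L *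
      ∑' x, (if N ≤ lg a c x then a x * c x * w x else 0) := by
    intro n
    have hn : R ≤ R + n := by linarith [n.cast_nonneg (α := ℝ)]
    have h1 := S.men_up hR le_rfl hn
    rw [add_sub_cancel_left] at h1
    rw [← h1, ← tsum_mul_left]
    have sc := S.summ_cl hn
    unfold men
    rw [sc.tsum_prod]
    refine Summable.tsum_le_tsum (fun x => ?_) sc.prod (hsum.mul_left _)
    split_ifs with hx
    · exact S.w_low hsa hsc hw R (R+n) x
    · rw [mul_zero]
      apply le_of_eq
      convert tsum_zero with y
      by_cases hb : b x y = 0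
      · simp [cur, hb]
      · rw [S.cl_eq hn hb (fun h => hx (by linarith [h.1]))]; simp
  obtain ⟨n, hn⟩ := exists_nat_gt (8 * Real.exp L *
      (∑' x, (if N ≤ lg a c x then a x * c x * w x else 0)) / δ)
  rw [div_lt_iff₀ hδ] at hn
  linarith [key n]

lemma energy' (S : Setup b a c K L)
    (hw : ∀ x, w x = schrod b q (fun z => Real.sqrt (a z * c z)) x / Real.sqrt (a x * c x))
    (e : X → ℝ) (he : (Function.support e).Finite) :
    quadForm b q (fun x => Real.sqrt (a x * c x) * e x) =
      ∑' x, w x * (Real.sqrt (a x * c x) * e x) ^ 2 +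
      (1 / 2) * ∑' p : X × X, b p.1 p.2 * (Real.sqrt (a p.1 * c p.1) * Real.sqrt (a p.2 * c p.2)) *
        (e p.1 - e p.2) ^ 2 := by
  have := energy b q S.sy S.lf (fun z => Real.sqrt (a z * c z))
    (fun x => Real.sqrt_pos.2 (mul_pos (S.ap x) (S.cp x))) e he
  simp only [← hw] at this
  exact this

lemma hardy (S : Setup b a c K L)
    (hw : ∀ x, w x = schrod b q (fun z => Real.sqrt (a z * c z)) x / Real.sqrt (a x * c x))
    (φ : X → ℝ) (hφ : (Function.support φ).Finite) :
    quadForm b q φ ≥ ∑' x, w x * φ x ^ 2 := by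
  have hp : ∀ x, 0 < Real.sqrt (a x * c x) :=
    fun x => Real.sqrt_pos.2 (mul_pos (S.ap x) (S.cp x))
  have h := S.energy' hw (fun x => φ x / Real.sqrt (a x * c x))
    (hφ.subset (fun x hx h => hx (by simp [h])))
  have e1 : ∀ x, Real.sqrt (a x * c x) * (φ x / Real.sqrt (a x * c x)) = φ x :=
    fun x => mul_div_cancel₀ _ (hp x).ne'
  simp only [e1] at h
  rw [h]
  have : 0 ≤ ∑' p : X × X, b p.1 p.2 * (Real.sqrt (a p.1 * c p.1) * Real.sqrt (a p.2 * c p.2)) *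
        (φ p.1 / Real.sqrt (a p.1 * c p.1) - φ p.2 / Real.sqrt (a p.2 * c p.2)) ^ 2 :=
    tsum_nonneg (fun p => mul_nonneg (mul_nonneg (S.nn _ _) (by positivity)) (sq_nonneg _))
  linarith

lemma critical (S : Setup b a c K L)
    (hw : ∀ x, w x = schrod b q (fun z => Real.sqrt (a z * c z)) x / Real.sqrt (a x * c x))
    (wt : X → ℝ) (h0 : ∀ x, 0 ≤ wt x) (hne : wt ≠ 0)
    (hh : ∀ φ : X → ℝ, (Function.support φ).Finite →
          quadForm b q φ ≥ ∑' x : X, (w x + wt x) * φ x ^ 2) : False := by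
  obtain ⟨z, hz⟩ := Function.ne_iff.1 hne
  have hz0 : 0 < wt z := lt_of_le_of_ne (h0 z) (Ne.symm hz)
  obtain ⟨R, -, hR⟩ := S.K_above 0
  obtain ⟨R', hR'⟩ := S.K_below
  set δ := men b a c (fun x => cl R (R+1) (lg a c x)) with hδ
  set δ' := men b a c (fun x => cl (R'-1) R' (lg a c x)) with hδ'
  have hm : 0 < wt z * (a z * c z) := mul_pos hz0 (mul_pos (S.ap z) (S.cp z))
  obtain ⟨n, hn⟩ := exists_gt (max (max R (-R')) (max (max (|lg a c z|) 1)
    ((δ + δ') / (wt z * (a z * c z)))))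
  simp only [max_lt_iff] at hn
  obtain ⟨⟨hn1, hn2⟩, ⟨hn3, hn4⟩, hn5⟩ := hn
  rw [div_lt_iff₀ hm] at hn5
  have hn0 : 0 < n := by linarith
  have i1 : n ≤ 2 * n := by linarith
  have i2 : -(2 * n) ≤ -n := by linarith
  set e : X → ℝ := fun x => 3 + (-1/n) * cl n (2*n) (lg a c x) + (1/n) * cl (-(2*n)) (-n) (lg a c x)
    with he
  have hes : (Function.support e).Finite := by
    refine (S.fin (-(2*n)) (2*n)).subset (fun x hx => ?_)
    by_contra hcon
    apply hx
    rw [Set.mem_setOf_eq, not_and_or, not_le, not_le] at hcon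
    simp only [he]
    rcases hcon with h | h
    · rw [cl_low i1 (by linarith), cl_low i2 h.le]; field_simp; ring
    · rw [cl_high i1 h.le, cl_high i2 (by linarith)]; field_simp; ring
  have hez : e z = 1 := by
    have := abs_lt.1 hn3
    simp only [he]
    rw [cl_low i1 this.2.le, cl_high i2 this.1.le]; field_simp; ring
  have h1 := S.energy' hw e hes
  have h2 := S.en_bound i1 i2 (-1/n) (1/n) e 3 (fun x => rfl) hes
  rw [S.men_up hR hn1.le i1, S.men_down hR' (by linarith) i2] at h2
  have fs : ∀ G : X → ℝ, Summable (fun x => G x * (Real.sqrt (a x * c x) * e x) ^ 2) := by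
    intro G
    apply summable_of_hasFiniteSupport
    refine hes.subset (fun x hx h => hx ?_)
    simp [h]
  have h3 := hh (fun x => Real.sqrt (a x * c x) * e x)
    (hes.subset (fun x hx h => hx (by simp [h])))
  simp only [add_mul] at h3
  rw [(fs w).tsum_add (fs wt)] at h3
  have h4 : wt z * (a z * c z) ≤ ∑' x, wt x * (Real.sqrt (a x * c x) * e x) ^ 2 := by
    have := (fs wt).le_tsum z (fun x _ => mul_nonneg (h0 x) (sq_nonneg _))
    rw [hez, mul_one, Real.sq_sqrt (mul_pos (S.ap z) (S.cp z)).le] at this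
    exact this
  rw [← hδ, ← hδ'] at h2
  have h5 : 2 * (-1 / n) ^ 2 * ((2 * n - n) * δ) + 2 * (1 / n) ^ 2 * ((-n - -(2 * n)) * δ')
      = 2 * ((δ + δ') / n) := by field_simp; ring
  rw [h5] at h2
  have h6 : (δ + δ') / n < wt z * (a z * c z) := by
    rw [div_lt_iff₀ hn0]; linarith
  linarith

open Classical in
lemma opt_inf (S : Setup b a c K L) (hsa : ∀ x, 0 ≤ schrod b q a x)
    (hsc : ∀ x, 0 ≤ schrod b q c x)
    (hw : ∀ x, w x = schrod b q (fun z => Real.sqrt (a z * c z)) x / Real.sqrt (a x * c x))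
    (lam : ℝ) (hl : 0 < lam) (W : Set X) (hW : W.Finite) :
    ∃ φ : X → ℝ, (Function.support φ).Finite ∧ (∀ x ∈ W, φ x = 0) ∧
        quadForm b q φ < (1 + lam) * ∑' x : X, w x * φ x ^ 2 := by
  obtain ⟨R0, hR0⟩ := (hW.image (lg a c)).bddAbove
  obtain ⟨R, hR1, hR⟩ := S.K_above R0
  have hWR : ∀ x ∈ W, lg a c x ≤ R := fun x hx => (hR0 (Set.mem_image_of_mem _ hx)).trans hR1
  set δ := men b a c (fun x => cl R (R+1) (lg a c x)) with hδ
  set T : X → ℝ := fun x => if R + 1 ≤ lg a c x then a x * c x * w x else 0 with hT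
  have hwn := S.w_nonneg hsa hsc hw
  have hacw : ∀ x, 0 ≤ a x * c x * w x :=
    fun x => mul_nonneg (mul_pos (S.ap x) (S.cp x)).le (hwn x)
  have hT0 : ∀ x, 0 ≤ T x := by
    intro x
    simp only [hT]
    split_ifs
    · exact hacw x
    · exact le_rfl
  have hns := S.not_summ hsa hsc hw (R + 1)
  obtain ⟨F, hF⟩ : ∃ F : Finset X, 2 * δ / lam < ∑ x ∈ F, T x := by
    by_contra hcon
    push Not at hcon
    exact hns (summable_of_sum_le hT0 hcon)
  obtain ⟨M0, hM0⟩ := (F.finite_toSet.image (lg a c)).bddAbove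
  set M := max M0 (R + 1) with hM
  have hMR : R + 1 ≤ M := le_max_right _ _
  have i1 : R ≤ R + 1 := by linarith
  have i2 : M ≤ M + 1 := by linarith
  set e : X → ℝ := fun x => (M - R) + 1 * cl R (R+1) (lg a c x) + (-1) * cl M (M+1) (lg a c x)
    with he
  have hes : (Function.support e).Finite := by
    refine (S.fin R (M+1)).subset (fun x hx => ?_)
    by_contra hcon
    apply hx
    rw [Set.mem_setOf_eq, not_and_or, not_le, not_le] at hcon
    simp only [he]
    rcases hcon with h | h
    · rw [cl_low i1 h.le, cl_low i2 (by linarith)]; ring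
    · rw [cl_high i1 (by linarith), cl_high i2 h.le]; ring
  have heW : ∀ x, lg a c x ≤ R → e x = 0 := by
    intro x hx
    simp only [he]
    rw [cl_low i1 hx, cl_low i2 (by linarith)]; ring
  have he1 : ∀ x ∈ F, R + 1 ≤ lg a c x → e x = 1 := by
    intro x hx h
    have : lg a c x ≤ M := (hM0 (Set.mem_image_of_mem _ hx)).trans (le_max_left _ _)
    simp only [he]
    rw [cl_high i1 h, cl_low i2 this]; ring
  have h1 := S.energy' hw e hes
  have h2 := S.en_bound i1 i2 1 (-1) e (M - R) (fun x => rfl) hes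
  rw [S.men_up hR (by linarith : R ≤ M) i2, ← hδ] at h2
  refine ⟨fun x => Real.sqrt (a x * c x) * e x, hes.subset (fun x hx h => hx (by simp [h])),
    fun x hx => by simp [heW x (hWR x hx)], ?_⟩
  have fs : Summable (fun x => w x * (Real.sqrt (a x * c x) * e x) ^ 2) := by
    apply summable_of_hasFiniteSupport
    refine hes.subset (fun x hx h => hx ?_)
    simp [h]
  have h3 : ∑ x ∈ F, T x ≤ ∑' x, w x * (Real.sqrt (a x * c x) * e x) ^ 2 := by
    refine le_trans (Finset.sum_le_sum (fun x hx => ?_))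
      (fs.sum_le_tsum F (fun x _ => mul_nonneg (hwn x) (sq_nonneg _)))
    simp only [hT]
    split_ifs with h
    · rw [he1 x hx h, mul_one, Real.sq_sqrt (mul_pos (S.ap x) (S.cp x)).le, mul_comm]
    · exact mul_nonneg (hwn x) (sq_nonneg _)
  have h4 := hF.trans_le h3
  rw [div_lt_iff₀ hl] at h4
  rw [h1]
  linarith

end Setup
end Opt

/-- the supersolution construction with a bounded quotient
`u₀ = u/v` yields an optimal Hardy weight. -/
theorem stmt6 (X : Type) [Countable X] [Infinite X]
    (b : X → X → ℝ) (q : X → ℝ)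
    (hb_nonneg : ∀ x y, 0 ≤ b x y) (hb_symm : ∀ x y, b x y = b y x)
    (hb_diag : ∀ x, b x x = 0) (hb_row : ∀ x, Summable fun y => b x y)
    (hconn : ∀ x y : X, Relation.ReflTransGen (fun a c => 0 < b a c) x y)
    (u v : X → ℝ)
    (hu_mem : memF b u) (hvu_mem : memF b (fun x => v x - u x))
    (hu_pos : ∀ x, 0 < u x) (hvu_pos : ∀ x, 0 < v x - u x)
    (hu_super : ∀ x, 0 ≤ schrod b q u x)
    (hvu_super : ∀ x, 0 ≤ schrod b q (fun z => v z - u z) x)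
    (K : Set X) (hK : K.Finite)
    (hu_harm : ∀ x ∉ K, schrod b q u x = 0)
    (hvu_harm : ∀ x ∉ K, schrod b q (fun z => v z - u z) x = 0)
    (hproper : ∀ I : Set ℝ, IsCompact I → I ⊆ Set.Ioo (0 : ℝ) 1 →
      ((fun x => u x / v x) ⁻¹' I).Finite)
    (hsup : ∀ ε : ℝ, 0 < ε → ∃ x : X, 1 - ε < u x / v x)
    (hosc : ∃ C : ℝ, ∀ x y, 0 < b x y →
      ((u x / v x) * (1 - u y / v y)) / ((u y / v y) * (1 - u x / v x)) ≤ C)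
    (w : X → ℝ)
    (hw : ∀ x, w x =
      schrod b q (fun z => Real.sqrt (u z * (v z - u z))) x /
        Real.sqrt (u x * (v x - u x))) :
    ((∀ φ : X → ℝ, (Function.support φ).Finite →
        quadForm b q φ ≥ ∑' x : X, w x * φ x ^ 2) ∧
      ¬ ∃ wt : X → ℝ, (∀ x, 0 ≤ wt x) ∧ wt ≠ 0 ∧
        (∀ φ : X → ℝ, (Function.support φ).Finite →
          quadForm b q φ ≥ ∑' x : X, (w x + wt x) * φ x ^ 2)) ∧
    (¬ Summable (fun x : X => u x * (v x - u x) * w x)) ∧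
    (∀ lam : ℝ, 0 < lam → ∀ W : Set X, W.Finite →
      ∃ φ : X → ℝ, (Function.support φ).Finite ∧ (∀ x ∈ W, φ x = 0) ∧
        quadForm b q φ < (1 + lam) * ∑' x : X, w x * φ x ^ 2) ∧
    (∀ x, schrod b q u x = 0 → schrod b q v x = 0 →
      w x = (1 / 2) * ∑' y : X, b x y *
        (Real.sqrt (u y / u x) - Real.sqrt ((v y - u y) / (v x - u x))) ^ 2) := by
  set c : X → ℝ := fun z => v z - u z with hc
  have hv : ∀ x, v x = u x + c x := fun x => by simp [hc]
  obtain ⟨C, hC⟩ := hosc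
  have hcp : ∀ x, 0 < c x := hvu_pos
  have hratio : ∀ x y, 0 < b x y → u x * c y ≤ C * (u y * c x) := by
    intro x y hxy
    have h := hC x y hxy
    have hx := hu_pos x
    have hy := hu_pos y
    have hcx := hcp x
    have hcy := hcp y
    have e : (u x / v x) * (1 - u y / v y) / ((u y / v y) * (1 - u x / v x)) =
        (u x * c y) / (u y * c x) := by
      rw [hv x, hv y]
      have h1 : 1 - u y / (u y + c y) = c y / (u y + c y) := by field_simp; ring
      have h2 : 1 - u x / (u x + c x) = c x / (u x + c x) := by field_simp; ring
      rw [h1, h2]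
      field_simp
    rw [e, div_le_iff₀ (by positivity)] at h
    exact h
  have hlip : ∀ x y, b x y ≠ 0 → Opt.lg u c x - Opt.lg u c y ≤ Real.log (max C 1) := by
    intro x y hxy
    have hxy' : 0 < b x y := lt_of_le_of_ne (hb_nonneg x y) (Ne.symm hxy)
    have h := hratio x y hxy'
    have hx := hu_pos x
    have hy := hu_pos y
    have hcx := hcp x
    have hcy := hcp y
    have h' : u x * c y ≤ max C 1 * (u y * c x) :=
      h.trans (mul_le_mul_of_nonneg_right (le_max_left _ _) (by positivity))
    have hm : 0 < max C 1 := lt_max_of_lt_right one_pos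
    have h2 := Real.log_le_log (by positivity) h'
    rw [Real.log_mul hx.ne' hcy.ne', Real.log_mul hm.ne' (by positivity),
      Real.log_mul hy.ne' hcx.ne'] at h2
    unfold Opt.lg
    linarith
  have hu0 : ∀ x, u x / v x = Real.exp (Opt.lg u c x) / (1 + Real.exp (Opt.lg u c x)) := by
    intro x
    have hx := hu_pos x
    have hcx := hcp x
    rw [hv]
    unfold Opt.lg
    rw [Real.exp_sub, Real.exp_log hx, Real.exp_log hcx]
    field_simp
    ring
  have hmono : ∀ s t : ℝ, s ≤ t →
      Real.exp s / (1 + Real.exp s) ≤ Real.exp t / (1 + Real.exp t) := by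
    intro s t hst
    have h1 := Real.exp_le_exp.2 hst
    have h2 := Real.exp_pos s
    have h3 := Real.exp_pos t
    rw [div_le_div_iff₀ (by positivity) (by positivity)]
    nlinarith
  have hfin : ∀ α β, {x | α ≤ Opt.lg u c x ∧ Opt.lg u c x ≤ β}.Finite := by
    intro α β
    refine (hproper (Set.Icc (Real.exp α / (1 + Real.exp α)) (Real.exp β / (1 + Real.exp β)))
      isCompact_Icc ?_).subset ?_
    · intro t ht
      have h2 := Real.exp_pos α
      have h3 := Real.exp_pos β
      refine ⟨lt_of_lt_of_le (by positivity) ht.1, lt_of_le_of_lt ht.2 ?_⟩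
      rw [div_lt_one (by positivity)]; linarith
    · intro x hx
      simp only [Set.mem_preimage, hu0]
      exact ⟨hmono _ _ hx.1, hmono _ _ hx.2⟩
  have hsup' : ∀ R, ∃ x, R < Opt.lg u c x := by
    intro R
    have hR := Real.exp_pos R
    obtain ⟨x, hx⟩ := hsup (1 - Real.exp R / (1 + Real.exp R)) (by
      rw [sub_pos, div_lt_one (by positivity)]; linarith)
    refine ⟨x, ?_⟩
    by_contra h
    rw [hu0] at hx
    linarith [hmono _ _ (not_lt.1 h)]
  have hlf : ∀ x, {y | b x y ≠ 0}.Finite := by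
    intro x
    refine (hfin (Opt.lg u c x - Real.log (max C 1)) (Opt.lg u c x + Real.log (max C 1))).subset ?_
    intro y hy
    have h1 := hlip x y hy
    have h2 := hlip y x (by rw [hb_symm y x]; exact hy)
    exact ⟨by linarith, by linarith⟩
  have sm : ∀ x, ∀ G : X → ℝ, Summable (fun y => b x y * G y) := by
    intro x G
    apply summable_of_hasFiniteSupport
    refine (hlf x).subset (fun y hy h => hy ?_)
    simp [h]
  have S : Opt.Setup b u c K (Real.log (max C 1)) :=
    { nn := hb_nonneg, sy := hb_symm, lf := hlf, ap := hu_pos, cp := hcp, Kf := hK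
      harm := by
        intro x hx
        have h1 := hu_harm x hx
        have h2 := hvu_harm x hx
        have : ∑' y, Opt.cur b u c x y = c x * schrod b q u x - u x * schrod b q c x := by
          unfold schrod lap Opt.cur
          have : ∑' y, b x y * (u x * c y - c x * u y) =
              c x * ∑' y, b x y * (u x - u y) - u x * ∑' y, b x y * (c x - c y) := by
            rw [← tsum_mul_left, ← tsum_mul_left,
              ← ((sm x _).mul_left _).tsum_sub ((sm x _).mul_left _)]
            exact tsum_congr (fun y => by ring)
          rw [this]; ring
        rw [this, h1, h2]; ring
      fin := hfin, lip := hlip, sup := hsup', conn := hconn }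
  have hw' : ∀ x, w x =
      schrod b q (fun z => Real.sqrt (u z * c z)) x / Real.sqrt (u x * c x) := hw
  refine ⟨⟨fun φ hφ => S.hardy hw' φ hφ, ?_⟩, ?_, fun lam hl W hW =>
    S.opt_inf hu_super hvu_super hw' lam hl W hW, ?_⟩
  · rintro ⟨wt, h0, hne, hh⟩
    exact S.critical hw' wt h0 hne hh
  · intro hs
    classical
    apply S.not_summ hu_super hvu_super hw' 0
    refine Summable.of_nonneg_of_le (fun x => ?_) (fun x => ?_) hs
    · split_ifs
      · exact mul_nonneg (mul_pos (hu_pos x) (hcp x)).le (S.w_nonneg hu_super hvu_super hw' x)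
      · exact le_rfl
    · split_ifs
      · exact le_rfl
      · exact mul_nonneg (mul_pos (hu_pos x) (hcp x)).le (S.w_nonneg hu_super hvu_super hw' x)
  · intro x h1 h2
    have h3 : schrod b q c x = schrod b q v x - schrod b q u x := by
      unfold schrod lap
      have : ∑' y, b x y * (c x - c y) =
          ∑' y, b x y * (v x - v y) - ∑' y, b x y * (u x - u y) := by
        rw [← (sm x _).tsum_sub (sm x _)]
        exact tsum_congr (fun y => by simp only [hc]; ring)
      rw [this]; simp only [hc]; ring
    rw [hw' x, Opt.wform b q hlf u c hu_pos hcp x, h3, h1, h2]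
    simp [hc]
end

section
/- Let b be a graph over a countably infinite set X and q : X → ℝ a potential. Let f, g ∈ F(X) be strictly positive. Then (fg)^{1/2} ∈ F(X), all the series below converge absolutely, and for all x ∈ X: 2·(fg)^{1/2}(x)·H[(fg)^{1/2}](x) = f(x)·Hg(x) + g(x)·Hf(x) + Σ_{y∈X} b(x,y)·[g(x)^{1/2}(f(x)^{1/2} − f(y)^{1/2}) − f(x)^{1/2}(g(x)^{1/2} − g(y)^{1/2})]². -/
/-- chain rule for the square root. -/
theorem stmt8 (X : Type) [Countable X] [Infinite X]
    (b : X → X → ℝ) (q : X → ℝ)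
    (hb_nonneg : ∀ x y, 0 ≤ b x y) (hb_symm : ∀ x y, b x y = b y x)
    (hb_diag : ∀ x, b x x = 0) (hb_row : ∀ x, Summable fun y => b x y)
    (f g : X → ℝ) (hf_mem : memF b f) (hg_mem : memF b g)
    (hf_pos : ∀ x, 0 < f x) (hg_pos : ∀ x, 0 < g x) :
    memF b (fun z => Real.sqrt (f z * g z)) ∧
    (∀ x : X, Summable fun y => b x y *
      (Real.sqrt (g x) * (Real.sqrt (f x) - Real.sqrt (f y)) -
        Real.sqrt (f x) * (Real.sqrt (g x) - Real.sqrt (g y))) ^ 2) ∧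
    (∀ x : X,
      2 * Real.sqrt (f x * g x) * schrod b q (fun z => Real.sqrt (f z * g z)) x =
        f x * schrod b q g x + g x * schrod b q f x +
          ∑' y : X, b x y *
            (Real.sqrt (g x) * (Real.sqrt (f x) - Real.sqrt (f y)) -
              Real.sqrt (f x) * (Real.sqrt (g x) - Real.sqrt (g y))) ^ 2) := by
  have hf : ∀ x, Summable fun y => b x y * f y := fun x => by
    simpa only [abs_of_pos (hf_pos _)] using hf_mem x
  have hg : ∀ x, Summable fun y => b x y * g y := fun x => by
    simpa only [abs_of_pos (hg_pos _)] using hg_mem x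
  have hs : ∀ x, Summable fun y => b x y * Real.sqrt (f y * g y) := fun x => by
    refine Summable.of_nonneg_of_le
      (fun y => mul_nonneg (hb_nonneg x y) (Real.sqrt_nonneg _)) (fun y => ?_) ((hf x).add (hg x))
    rw [← mul_add]
    refine mul_le_mul_of_nonneg_left ?_ (hb_nonneg x y)
    rw [Real.sqrt_le_left (add_pos (hf_pos y) (hg_pos y)).le]
    nlinarith [hf_pos y, hg_pos y, mul_pos (hf_pos y) (hg_pos y)]
  have hlap : ∀ u : X → ℝ, (∀ x, Summable fun y => b x y * u y) → ∀ x,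
      HasSum (fun y => b x y * (u x - u y)) (lap b u x) := fun u hu x => by
    have h : Summable fun y => b x y * (u x - u y) := by
      simpa only [mul_sub] using ((hb_row x).mul_right (u x)).sub (hu x)
    exact h.hasSum
  have key : ∀ x y, b x y *
      (Real.sqrt (g x) * (Real.sqrt (f x) - Real.sqrt (f y)) -
        Real.sqrt (f x) * (Real.sqrt (g x) - Real.sqrt (g y))) ^ 2 =
      2 * Real.sqrt (f x * g x) * (b x y * (Real.sqrt (f x * g x) - Real.sqrt (f y * g y))) -
      f x * (b x y * (g x - g y)) - g x * (b x y * (f x - f y)) := fun x y => by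
    rw [Real.sqrt_mul (hf_pos x).le, Real.sqrt_mul (hf_pos y).le]
    have h1 := Real.sq_sqrt (hf_pos x).le
    have h2 := Real.sq_sqrt (hf_pos y).le
    have h3 := Real.sq_sqrt (hg_pos x).le
    have h4 := Real.sq_sqrt (hg_pos y).le
    generalize Real.sqrt (f x) = a at *
    generalize Real.sqrt (f y) = c at *
    generalize Real.sqrt (g x) = d at *
    generalize Real.sqrt (g y) = e at *
    rw [← h1, ← h2, ← h3, ← h4]
    ring
  have hsum : ∀ x, HasSum (fun y => b x y *
      (Real.sqrt (g x) * (Real.sqrt (f x) - Real.sqrt (f y)) -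
        Real.sqrt (f x) * (Real.sqrt (g x) - Real.sqrt (g y))) ^ 2)
      (2 * Real.sqrt (f x * g x) * lap b (fun z => Real.sqrt (f z * g z)) x -
        f x * lap b g x - g x * lap b f x) := fun x => by
    simp only [key]
    exact (((hlap (fun z => Real.sqrt (f z * g z)) hs x).mul_left _).sub
      ((hlap g hg x).mul_left _)).sub ((hlap f hf x).mul_left _)
  refine ⟨fun x => ?_, fun x => (hsum x).summable, fun x => ?_⟩
  · simpa only [abs_of_nonneg (Real.sqrt_nonneg _)] using hs x
  · rw [(hsum x).tsum_eq]
    simp only [schrod]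
    have h := Real.mul_self_sqrt (mul_pos (hf_pos x) (hg_pos x)).le
    linear_combination (2 * q x) * h
end

section
/- Let b be a graph over a countably infinite set X and q : X → ℝ a potential. Let v ∈ F(X) be strictly positive and f : X → ℝ be such that Hv = f·v on X. Then for all finitely supported φ, ψ : X → ℝ, h(φ,ψ) = (1/2)·Σ_{x,y∈X} b(x,y)·v(x)v(y)·(φ(x)/v(x) − φ(y)/v(y))·(ψ(x)/v(x) − ψ(y)/v(y)) + Σ_{x∈X} f(x)·φ(x)·ψ(x), where h(φ,ψ) = (1/2)Σ_{x,y∈X} b(x,y)(φ(x) − φ(y))(ψ(x) − ψ(y)) + Σ_{x∈X} q(x)φ(x)ψ(x). -/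
theorem summable_rows_aux {X : Type} (K : X × X → ℝ) (S : Set X) (hS : S.Finite)
    (h0 : ∀ x, x ∉ S → ∀ y, K (x, y) = 0) (hr : ∀ x, Summable fun y => K (x, y)) :
    Summable K := by
  apply Summable.of_abs
  rw [summable_prod_of_nonneg (fun _ => abs_nonneg _)]
  refine ⟨fun x => (hr x).abs, ?_⟩
  apply summable_of_hasFiniteSupport
  refine hS.subset fun x hx => ?_
  by_contra hxS
  apply hx
  simp [h0 x hxS]

/-- the ground state transform. -/
theorem stmt10 (X : Type) [Countable X] [Infinite X]
    (b : X → X → ℝ) (q : X → ℝ)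
    (hb_nonneg : ∀ x y, 0 ≤ b x y) (hb_symm : ∀ x y, b x y = b y x)
    (hb_diag : ∀ x, b x x = 0) (hb_row : ∀ x, Summable fun y => b x y)
    (v : X → ℝ) (hv_mem : memF b v) (hv_pos : ∀ x, 0 < v x)
    (f : X → ℝ) (hvf : ∀ x, schrod b q v x = f x * v x) :
    ∀ φ ψ : X → ℝ, (Function.support φ).Finite → (Function.support ψ).Finite →
      (1 / 2) * (∑' p : X × X, b p.1 p.2 * (φ p.1 - φ p.2) * (ψ p.1 - ψ p.2)) +
          ∑' x : X, q x * φ x * ψ x =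
        (1 / 2) * (∑' p : X × X, b p.1 p.2 * v p.1 * v p.2 *
            (φ p.1 / v p.1 - φ p.2 / v p.2) * (ψ p.1 / v p.1 - ψ p.2 / v p.2)) +
          ∑' x : X, f x * φ x * ψ x := by
  intro φ ψ hφ hψ
  have hvs : ∀ x, Summable fun y => b x y * v y := fun x => by
    simpa [abs_of_pos (hv_pos _)] using hv_mem x
  let G : X × X → ℝ := fun p => φ p.1 * ψ p.1 / v p.1 * (b p.1 p.2 * (v p.1 - v p.2))
  let P : X × X → ℝ := fun p => φ p.1 * (b p.1 p.2 * (ψ p.1 - ψ p.2))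
  have hG : Summable G := by
    refine summable_rows_aux G _ hφ (fun x hx y => ?_) (fun x => ?_)
    · have : φ x = 0 := by simpa using hx
      simp [G, this]
    · simp only [G]
      apply Summable.mul_left
      simp only [mul_sub]
      exact ((hb_row x).mul_right _).sub (hvs x)
  have hP : Summable P := by
    refine summable_rows_aux P _ hφ (fun x hx y => ?_) (fun x => ?_)
    · have : φ x = 0 := by simpa using hx
      simp [P, this]
    · simp only [P]
      apply Summable.mul_left
      simp only [mul_sub]
      refine ((hb_row x).mul_right _).sub (summable_of_hasFiniteSupport ?_)
      refine hψ.subset fun y hy hy0 => hy ?_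
      simp [hy0]
  have hG' : Summable (fun p : X × X => G p.swap) := (Equiv.prodComm X X).summable_iff.mpr hG
  have hP' : Summable (fun p : X × X => P p.swap) := (Equiv.prodComm X X).summable_iff.mpr hP
  have hGt : ∑' p : X × X, G p.swap = ∑' p, G p := (Equiv.prodComm X X).tsum_eq G
  have hA : Summable fun p : X × X => b p.1 p.2 * (φ p.1 - φ p.2) * (ψ p.1 - ψ p.2) := by
    refine (hP.add hP').congr fun p => ?_
    simp only [P, Prod.fst_swap, Prod.snd_swap, hb_symm p.2 p.1]
    ring
  have hB : (∑' p : X × X, b p.1 p.2 * v p.1 * v p.2 *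
      (φ p.1 / v p.1 - φ p.2 / v p.2) * (ψ p.1 / v p.1 - ψ p.2 / v p.2)) =
      (∑' p : X × X, b p.1 p.2 * (φ p.1 - φ p.2) * (ψ p.1 - ψ p.2)) -
        (∑' p, G p + ∑' p, G p) := by
    have hGG : ∑' p, G p + ∑' p, G p = ∑' p, G p + ∑' p : X × X, G p.swap := by rw [hGt]
    rw [hGG, ← hG.tsum_add hG', ← hA.tsum_sub (hG.add hG')]
    refine tsum_congr fun p => ?_
    have h1 := (hv_pos p.1).ne'
    have h2 := (hv_pos p.2).ne'
    simp only [G, Prod.fst_swap, Prod.snd_swap, hb_symm p.2 p.1]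
    field_simp
    ring
  have hq : ∀ r : X → ℝ, Summable fun x => r x * φ x * ψ x := fun r => by
    refine summable_of_hasFiniteSupport (hφ.subset fun y hy hy0 => hy ?_)
    simp [hy0]
  have hGs : ∑' p, G p = ∑' x, f x * φ x * ψ x - ∑' x, q x * φ x * ψ x := by
    rw [hG.tsum_prod, ← (hq f).tsum_sub (hq q)]
    refine tsum_congr fun x => ?_
    simp only [G]
    rw [tsum_mul_left]
    have h := hvf x
    unfold schrod lap at h
    rw [eq_sub_of_add_eq h]
    have h1 := (hv_pos x).ne'
    field_simp
  rw [hB, hGs]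
  ring
end

section
/- Let b be a graph over a countably infinite set X and let q : X → [0,∞) be a finitely supported potential; set H = L + q. Let u ∈ F(X) be a strictly positive nonconstant H-superharmonic function on X that is L-harmonic outside a finite set, and set w := L[u^{1/2}] / u^{1/2}. Assume that h − w is critical in X (i.e. h(φ) ≥ Σ_x w(x)φ(x)² for all finitely supported φ, and no w̃ : X → [0,∞), w̃ ≠ 0, satisfies h(φ) ≥ Σ_x (w(x)+w̃(x))φ(x)² for all finitely supported φ), and that the extended form satisfies h(u^{1/2}) = (1/2)Σ_{x,y} b(x,y)(u(x)^{1/2} − u(y)^{1/2})² + Σ_x q(x)u(x) = ∞. Then for every finite W ⊆ X and every λ > 0, the inequality h − (1+λ)w ≥ 0 fails on C_c(X∖W): there exists a finitely supported φ with support contained in X∖W such that h(φ) < (1+λ)·Σ_{x∈X} w(x)φ(x)². -/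
open scoped ENNReal


noncomputable def En {X : Type} (c : X → X → ℝ) (φ : X → ℝ) : ℝ :=
  ∑' p : X × X, c p.1 p.2 * (φ p.1 - φ p.2) ^ 2

lemma aux_summable {X : Type} (g : X × X → ℝ) (s : Set X) (hs : s.Finite)
    (h0 : ∀ x ∉ s, ∀ y, g (x, y) = 0) (hr : ∀ x, Summable fun y => g (x, y)) : Summable g := by
  apply Summable.of_norm
  rw [summable_prod_of_nonneg (fun _ => norm_nonneg _)]
  refine ⟨fun x => (hr x).norm, ?_⟩
  apply summable_of_hasFiniteSupport
  refine hs.subset ?_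
  intro x hx
  by_contra hxs
  apply hx
  simp [h0 x hxs]

lemma aux_swap {X : Type} (g : X × X → ℝ) (hg : Summable g) :
    Summable (fun p : X × X => g (p.2, p.1)) ∧ ∑' p : X × X, g (p.2, p.1) = ∑' p, g p :=
  ⟨(Equiv.prodComm X X).summable_iff.mpr hg, (Equiv.prodComm X X).tsum_eq g⟩

lemma aux_En_summable {X : Type} (c : X → X → ℝ) (hc : ∀ x y, 0 ≤ c x y)
    (hsymm : ∀ x y, c x y = c y x) (hrow : ∀ x, Summable fun y => c x y)
    (φ : X → ℝ) (hφ : (Function.support φ).Finite) :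
    Summable fun p : X × X => c p.1 p.2 * (φ p.1 - φ p.2) ^ 2 := by
  have h1 : Summable fun p : X × X => 2 * φ p.1 ^ 2 * c p.1 p.2 := by
    apply aux_summable _ _ hφ
    · intro x hx y
      simp [Function.notMem_support.mp hx]
    · intro x
      exact (hrow x).mul_left (2 * φ x ^ 2)
  have h2 := (aux_swap _ h1).1
  refine Summable.of_nonneg_of_le (fun p => mul_nonneg (hc _ _) (sq_nonneg _)) ?_ (h1.add h2)
  rintro ⟨x, y⟩
  simp only
  rw [hsymm y x]
  nlinarith [mul_nonneg (hc x y) (sq_nonneg (φ x + φ y))]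

lemma aux_En_nonneg {X : Type} (c : X → X → ℝ) (hc : ∀ x y, 0 ≤ c x y) (φ : X → ℝ) :
    0 ≤ En c φ := tsum_nonneg (fun _ => mul_nonneg (hc _ _) (sq_nonneg _))

lemma aux_En_le {X : Type} (c : X → X → ℝ) (hc : ∀ x y, 0 ≤ c x y)
    (hsymm : ∀ x y, c x y = c y x) (hrow : ∀ x, Summable fun y => c x y)
    (φ ψ χ : X → ℝ) (hφ : (Function.support φ).Finite) (hψ : (Function.support ψ).Finite)
    (hχ : (Function.support χ).Finite) (k : ℝ)
    (h : ∀ x y, (χ x - χ y) ^ 2 ≤ k * (φ x - φ y) ^ 2 + k * (ψ x - ψ y) ^ 2) :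
    En c χ ≤ k * En c φ + k * En c ψ := by
  have h1 := (aux_En_summable c hc hsymm hrow φ hφ).mul_left k
  have h2 := (aux_En_summable c hc hsymm hrow ψ hψ).mul_left k
  have h3 := aux_En_summable c hc hsymm hrow χ hχ
  unfold En
  rw [← tsum_mul_left, ← tsum_mul_left, ← h1.tsum_add h2]
  refine h3.tsum_le_tsum ?_ (h1.add h2)
  rintro ⟨x, y⟩
  have := mul_le_mul_of_nonneg_left (h x y) (hc x y)
  simp only
  linarith

/-- ground state representation -/
lemma aux_gs {X : Type} (b : X → X → ℝ)
    (hb_nonneg : ∀ x y, 0 ≤ b x y) (hb_symm : ∀ x y, b x y = b y x)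
    (hb_row : ∀ x, Summable fun y => b x y)
    (v : X → ℝ) (hv : ∀ x, 0 < v x) (hvr : ∀ x, Summable fun y => b x y * v y)
    (ψ : X → ℝ) (hψ : (Function.support ψ).Finite) :
    En b (fun x => v x * ψ x) = En (fun x y => v x * (b x y * v y)) ψ
      + 2 * ∑' x, lap b v x / v x * (v x * ψ x) ^ 2 := by
  have hc : ∀ x y, 0 ≤ v x * (b x y * v y) := fun x y =>
    mul_nonneg (hv x).le (mul_nonneg (hb_nonneg x y) (hv y).le)
  have hs : ∀ x y, v x * (b x y * v y) = v y * (b y x * v x) := fun x y => by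
    rw [hb_symm x y]; ring
  have hr : ∀ x, Summable fun y => v x * (b x y * v y) := fun x => (hvr x).mul_left _
  have h0 := aux_En_summable _ hc hs hr ψ hψ
  have hrow : ∀ x, Summable fun y => b x y * (v x - v y) := fun x => by
    have := ((hb_row x).mul_right (v x)).sub (hvr x)
    refine this.congr fun y => by ring
  have h1 : Summable fun p : X × X => ψ p.1 ^ 2 * v p.1 * (b p.1 p.2 * (v p.1 - v p.2)) := by
    apply aux_summable _ _ hψ
    · intro x hx y
      simp [Function.notMem_support.mp hx]
    · intro x
      exact (hrow x).mul_left (ψ x ^ 2 * v x)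
  obtain ⟨h2, h2'⟩ := aux_swap _ h1
  have h3 : ∑' p : X × X, ψ p.1 ^ 2 * v p.1 * (b p.1 p.2 * (v p.1 - v p.2)) =
      ∑' x, lap b v x / v x * (v x * ψ x) ^ 2 := by
    rw [h1.tsum_prod' (fun x => (hrow x).mul_left (ψ x ^ 2 * v x))]
    refine tsum_congr fun x => ?_
    simp only
    rw [tsum_mul_left]
    have := (hv x).ne'
    unfold lap
    field_simp
  have h4 : En b (fun x => v x * ψ x) = ∑' p : X × X,
      ((v p.1 * (b p.1 p.2 * v p.2)) * (ψ p.1 - ψ p.2) ^ 2 +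
      (ψ p.1 ^ 2 * v p.1 * (b p.1 p.2 * (v p.1 - v p.2)) +
       ψ p.2 ^ 2 * v p.2 * (b p.2 p.1 * (v p.2 - v p.1)))) := by
    refine tsum_congr ?_
    rintro ⟨x, y⟩
    simp only
    rw [hb_symm y x]
    ring
  rw [h4, h0.tsum_add (h1.add h2), h1.tsum_add h2, h2', h3]
  unfold En
  ring

/-- optimality near infinity. -/
theorem stmt16 (X : Type) [Countable X] [Infinite X]
    (b : X → X → ℝ) (q : X → ℝ)
    (hb_nonneg : ∀ x y, 0 ≤ b x y) (hb_symm : ∀ x y, b x y = b y x)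
    (hb_diag : ∀ x, b x x = 0) (hb_row : ∀ x, Summable fun y => b x y)
    (hq_nonneg : ∀ x, 0 ≤ q x) (hq_fin : (Function.support q).Finite)
    (u : X → ℝ) (hu_mem : memF b u) (hu_pos : ∀ x, 0 < u x)
    (hu_noncst : ∃ x y : X, u x ≠ u y)
    (hu_super : ∀ x, 0 ≤ schrod b q u x)
    (K : Set X) (hK : K.Finite) (hu_harm : ∀ x ∉ K, lap b u x = 0)
    (w : X → ℝ)
    (hw : ∀ x, w x = lap b (fun z => Real.sqrt (u z)) x / Real.sqrt (u x))
    (hcrit : (∀ φ : X → ℝ, (Function.support φ).Finite →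
        quadForm b q φ ≥ ∑' x : X, w x * φ x ^ 2) ∧
      ¬ ∃ wt : X → ℝ, (∀ x, 0 ≤ wt x) ∧ wt ≠ 0 ∧
        (∀ φ : X → ℝ, (Function.support φ).Finite →
          quadForm b q φ ≥ ∑' x : X, (w x + wt x) * φ x ^ 2))
    (hdiv : (1 / 2 : ℝ≥0∞) * (∑' p : X × X,
        ENNReal.ofReal (b p.1 p.2 * (Real.sqrt (u p.1) - Real.sqrt (u p.2)) ^ 2)) +
      (∑' x : X, ENNReal.ofReal (q x * u x)) = ⊤) :
    ∀ W : Set X, W.Finite → ∀ lam : ℝ, 0 < lam →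
      ∃ φ : X → ℝ, (Function.support φ).Finite ∧ (∀ x ∈ W, φ x = 0) ∧
        quadForm b q φ < (1 + lam) * ∑' x : X, w x * φ x ^ 2 := by
  classical
  set v : X → ℝ := fun z => Real.sqrt (u z) with hvdef
  have hv : ∀ x, 0 < v x := fun x => Real.sqrt_pos.mpr (hu_pos x)
  have hvr : ∀ x, Summable fun y => b x y * v y := by
    intro x
    refine Summable.of_nonneg_of_le (fun y => mul_nonneg (hb_nonneg _ _) (hv y).le) ?_
      ((hb_row x).add (hu_mem x))
    intro y
    have h1 : v y ≤ 1 + |u y| := by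
      have := Real.sq_sqrt (hu_pos y).le
      have h2 := le_abs_self (u y)
      change v y ^ 2 = u y at this
      nlinarith [sq_nonneg (v y - 1)]
    have := mul_le_mul_of_nonneg_left h1 (hb_nonneg x y)
    linarith
  set c : X → X → ℝ := fun x y => v x * (b x y * v y) with hcdef
  have hc : ∀ x y, 0 ≤ c x y := fun x y =>
    mul_nonneg (hv x).le (mul_nonneg (hb_nonneg x y) (hv y).le)
  have hs : ∀ x y, c x y = c y x := fun x y => by
    simp only [hcdef]; rw [hb_symm x y]; ring
  have hr : ∀ x, Summable fun y => c x y := fun x => (hvr x).mul_left _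
  have gs : ∀ ψ : X → ℝ, (Function.support ψ).Finite →
      quadForm b q (fun x => v x * ψ x) = 1 / 2 * En c ψ + ∑' x, w x * (v x * ψ x) ^ 2
        + ∑' x, q x * (v x * ψ x) ^ 2 := by
    intro ψ hψ
    have := aux_gs b hb_nonneg hb_symm hb_row v hv hvr ψ hψ
    unfold En at this
    unfold quadForm
    simp only
    rw [this]
    simp only [hw]
    unfold En
    ring
  have fsum : ∀ (f φ : X → ℝ), (Function.support φ).Finite →
      Summable fun x => f x * φ x ^ 2 := by
    intro f φ hφ
    apply summable_of_hasFiniteSupport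
    refine hφ.subset fun x hx => ?_
    intro h
    apply hx
    simp [h]
  have rep : ∀ φ : X → ℝ, (Function.support φ).Finite → ∃ ψ : X → ℝ,
      (Function.support ψ).Finite ∧ φ = fun x => v x * ψ x := by
    intro φ hφ
    refine ⟨fun x => φ x / v x, hφ.subset fun x hx h => hx (by simp [h]), ?_⟩
    funext x
    have := (hv x).ne'
    field_simp
  -- q = 0
  have hq0 : q = 0 := by
    by_contra hne
    refine hcrit.2 ⟨q, hq_nonneg, hne, ?_⟩
    intro φ hφ
    obtain ⟨ψ, hψ, rfl⟩ := rep φ hφ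
    rw [gs ψ hψ]
    simp only [add_mul]
    rw [(fsum w _ hφ).tsum_add (fsum q _ hφ)]
    have := aux_En_nonneg c hc ψ
    linarith
  subst hq0
  have gs' : ∀ ψ : X → ℝ, (Function.support ψ).Finite →
      quadForm b 0 (fun x => v x * ψ x) = 1 / 2 * En c ψ + ∑' x, w x * (v x * ψ x) ^ 2 := by
    intro ψ hψ
    rw [gs ψ hψ]
    simp
  have qE : ∀ φ : X → ℝ, quadForm b 0 φ = 1 / 2 * En b φ := by
    intro φ
    simp [quadForm, En]
  -- point version
  have point : ∀ x : X, ∀ ε : ℝ, 0 < ε → ∃ ψ : X → ℝ, (Function.support ψ).Finite ∧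
      (∀ y, ψ y ≤ 1) ∧ ψ x = 1 ∧ En c ψ ≤ ε := by
    intro x ε hε
    by_contra hno
    push Not at hno
    have hux : 0 < v x ^ 2 := pow_pos (hv x) 2
    refine hcrit.2 ⟨fun y => if y = x then ε / 2 / v x ^ 2 else 0, ?_, ?_, ?_⟩
    · intro y
      dsimp only
      split_ifs <;> positivity
    · intro h
      have := congrFun h x
      simp at this
      rcases this with h | h
      · exact hε.ne' h
      · exact (hv x).ne' h
    · intro φ hφ
      obtain ⟨ψ, hψ, rfl⟩ := rep φ hφ
      rw [gs' ψ hψ]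
      simp only [add_mul]
      rw [(fsum w _ hφ).tsum_add (fsum _ _ hφ)]
      have e1 : ∑' y, (if y = x then ε / 2 / v x ^ 2 else 0) * (v y * ψ y) ^ 2
          = ε / 2 * ψ x ^ 2 := by
        rw [tsum_eq_single x]
        · have := (hv x).ne'
          simp only [if_true]
          field_simp
        · intro y hy
          simp [hy]
      rw [e1]
      suffices h : ε * ψ x ^ 2 ≤ En c ψ by linarith
      by_cases h0 : ψ x = 0
      · rw [h0]
        have := aux_En_nonneg c hc ψ
        simpa using this
      · have hfin : (Function.support fun y => min 1 |ψ y / ψ x|).Finite :=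
          hψ.subset fun y hy h => hy (by simp [h])
        have h1 := hno (fun y => min 1 |ψ y / ψ x|) hfin (fun y => min_le_left _ _) (by simp [h0])
        have hfin2 : (Function.support fun y => ψ y / ψ x).Finite :=
          hψ.subset fun y hy h => hy (by simp [h])
        have h2 := aux_En_le c hc hs hr (fun y => ψ y / ψ x) (fun _ => 0) _ hfin2 (by simp) hfin 1
          (by
            intro y z
            have a1 := abs_min_sub_min_le_max 1 |ψ y / ψ x| 1 |ψ z / ψ x|
            have a2 := abs_abs_sub_abs_le (ψ y / ψ x) (ψ z / ψ x)
            have a3 : abs (min 1 (abs (ψ y / ψ x)) - min 1 (abs (ψ z / ψ x))) ≤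
                abs (ψ y / ψ x - ψ z / ψ x) := by
              refine a1.trans (max_le (by simp) a2)
            have := sq_le_sq.mpr a3
            simpa using this)
        have h3 : En c (fun y => ψ y / ψ x) = En c ψ / ψ x ^ 2 := by
          unfold En
          rw [← tsum_div_const]
          refine tsum_congr fun p => ?_
          field_simp
        have h4 : En c (fun _ => 0) = 0 := by simp [En]
        rw [h3, h4] at h2
        have h5 : 0 < ψ x ^ 2 := by positivity
        have h6 : ε ≤ En c ψ / ψ x ^ 2 := by linarith
        exact (le_div_iff₀ h5).mp h6
  have fins : ∀ F : Finset X, ∀ ε : ℝ, 0 < ε → ∃ ψ : X → ℝ, (Function.support ψ).Finite ∧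
      (∀ y, ψ y ≤ 1) ∧ (∀ x ∈ F, ψ x = 1) ∧ En c ψ ≤ ε := by
    intro F
    induction F using Finset.induction_on with
    | empty =>
      intro ε hε
      exact ⟨fun _ => 0, by simp, by simp, by simp, by simpa [En] using hε.le⟩
    | insert a F ha ih =>
      intro ε hε
      obtain ⟨ψ, f1, l1, o1, e1⟩ := ih (ε / 2) (by linarith)
      obtain ⟨χ, f2, l2, o2, e2⟩ := point a (ε / 2) (by linarith)
      have f3 : (Function.support fun y => max (ψ y) (χ y)).Finite := by
        refine (f1.union f2).subset fun y hy => ?_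
        by_contra h
        simp only [Set.mem_union, Function.mem_support, not_or, not_not] at h
        exact hy (by simp [h.1, h.2])
      refine ⟨fun y => max (ψ y) (χ y), f3, fun y => max_le (l1 y) (l2 y), ?_, ?_⟩
      · intro x hx
        rcases Finset.mem_insert.mp hx with rfl | hx
        · simp [o2, l1]
        · simp [o1 x hx, l2]
      · have := aux_En_le c hc hs hr ψ χ _ f1 f2 f3 1 (by
          intro y z
          have a1 := abs_max_sub_max_le_max (ψ y) (χ y) (ψ z) (χ z)
          rw [one_mul, one_mul]
          rcases le_max_iff.mp a1 with h | h
          · have := sq_le_sq.mpr h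
            nlinarith [sq_nonneg (χ y - χ z)]
          · have := sq_le_sq.mpr h
            nlinarith [sq_nonneg (ψ y - ψ z)])
        linarith
  -- main argument
  intro W hW lam hlam
  by_contra hno
  push Not at hno
  set iW : X → ℝ := fun x => if x ∈ W then -1 else 0 with hiW
  have fW : (Function.support iW).Finite := hW.subset fun x hx => by
    by_contra h
    exact hx (by simp [hiW, h])
  have fvW : (Function.support fun x => v x * -iW x).Finite :=
    fW.subset fun x hx h => hx (by simp [h])
  set C : ℝ := 2 * ((1 + 1 / lam) * (2 * 1 + 2 * En c iW)) + 2 * En b (fun x => v x * -iW x)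
    with hC
  have bound : ∀ F : Finset X, ∃ φ : X → ℝ, (Function.support φ).Finite ∧
      (∀ x ∈ F, φ x = v x) ∧ En b φ ≤ C := by
    intro F
    obtain ⟨ψ, f1, -, o1, e1⟩ := fins (F ∪ hW.toFinset) 1 one_pos
    have f2 : (Function.support fun x => ψ x + iW x).Finite :=
      (f1.union fW).subset (Function.support_add ψ iW)
    have f3 : (Function.support fun x => v x * (ψ x + iW x)).Finite :=
      f2.subset fun x hx h => hx (by simp [h])
    have f4 : (Function.support fun x => v x * ψ x).Finite :=
      f1.subset fun x hx h => hx (by simp [h])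
    refine ⟨fun x => v x * ψ x, f4, ?_, ?_⟩
    · intro x hx
      simp [o1 x (Finset.mem_union_left _ hx)]
    have h1 := aux_En_le c hc hs hr ψ iW _ f1 fW f2 2 (by
      intro x y
      nlinarith [sq_nonneg ((ψ x - ψ y) - (iW x - iW y))])
    have h2 := hno (fun x => v x * (ψ x + iW x)) f3 (by
      intro x hx
      simp [hiW, hx, o1 x (Finset.mem_union_right _ (hW.mem_toFinset.mpr hx))])
    have h3 := gs' (fun x => ψ x + iW x) f2
    have h4 := qE (fun x => v x * (ψ x + iW x))
    have h5 := aux_En_le b hb_nonneg hb_symm hb_row (fun x => v x * (ψ x + iW x))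
      (fun x => v x * -iW x) _ f3 fvW f4 2 (by
      intro x y
      nlinarith [sq_nonneg ((v x * (ψ x + iW x) - v y * (ψ y + iW y)) -
        (v x * -iW x - v y * -iW y))])
    set S := ∑' x, w x * (v x * (ψ x + iW x)) ^ 2
    have h6 : En b (fun x => v x * (ψ x + iW x)) ≤
        (1 + 1 / lam) * En c (fun x => ψ x + iW x) := by
      have h7 : lam * (2 * S) ≤ En c (fun x => ψ x + iW x) := by nlinarith
      have h8 : 2 * S ≤ En c (fun x => ψ x + iW x) / lam := by
        rw [le_div_iff₀ hlam]; linarith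
      have h9 : (1 + 1 / lam) * En c (fun x => ψ x + iW x) =
        En c (fun x => ψ x + iW x) + En c (fun x => ψ x + iW x) / lam := by ring
      linarith
    have h10 : (1 + 1 / lam) * En c (fun x => ψ x + iW x) ≤
        (1 + 1 / lam) * (2 * 1 + 2 * En c iW) := by
      apply mul_le_mul_of_nonneg_left _ (by positivity)
      linarith
    linarith
  have hsum : Summable fun p : X × X => b p.1 p.2 * (v p.1 - v p.2) ^ 2 := by
    refine summable_of_sum_le (c := C) (fun p => mul_nonneg (hb_nonneg _ _) (sq_nonneg _)) ?_
    intro T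
    obtain ⟨φ, f, e, l⟩ := bound (T.image Prod.fst ∪ T.image Prod.snd)
    refine le_trans ?_ l
    refine le_trans (le_of_eq ?_) ((aux_En_summable b hb_nonneg hb_symm hb_row φ f).sum_le_tsum T
      (fun p _ => mul_nonneg (hb_nonneg _ _) (sq_nonneg _)))
    refine Finset.sum_congr rfl fun p hp => ?_
    rw [e p.1 (Finset.mem_union_left _ (Finset.mem_image_of_mem _ hp)),
      e p.2 (Finset.mem_union_right _ (Finset.mem_image_of_mem _ hp))]
  have hfin := hsum.tsum_ofReal_ne_top
  simp only [Pi.zero_apply, zero_mul, ENNReal.ofReal_zero, tsum_zero, add_zero] at hdiv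
  exact ENNReal.mul_ne_top (by simp) hfin hdiv
end

section
/- Let b and b′ be graphs over a countably infinite set X with potentials q and q′, associated forms h and h′ (on finitely supported functions) and operators H = L_b + q, H′ = L_{b′} + q′. Let v be a strictly positive H-superharmonic function (v ∈ F_b(X), Hv ≥ 0 on X) such that v^{1/2} ∈ F_{b′}(X) is H′-harmonic on X (H′(v^{1/2}) = 0). Assume h′ is critical in X, i.e. h′(φ) ≥ 0 for all finitely supported φ and there is no w̃ : X → [0,∞), w̃ ≠ 0, with h′(φ) ≥ Σ_x w̃(x)φ(x)² for all finitely supported φ. Let W ⊆ X and C ≥ 0 be such that h(φ) ≤ C·h′(φ) for all finitely supported φ with support in X∖W. Then for every function f : X → ℝ supported in X∖W (not necessarily finitely supported), h_v(f/v) ≤ C·h′_{v^{1/2}}(f/v^{1/2}), where for a graph a over X and a strictly positive function g the extended form is a_g(f) := (1/2)·Σ_{x,y∈X} a(x,y)·g(x)g(y)·(f(x) − f(y))² ∈ [0,∞]. -/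
open scoped ENNReal

/-- The extended ground-state-transformed form `a_g(f)` with values in `[0,∞]`. -/
noncomputable def extForm {X : Type} (a : X → X → ℝ) (g f : X → ℝ) : ℝ≥0∞ :=
  (1 / 2 : ℝ≥0∞) * ∑' p : X × X,
    ENNReal.ofReal (a p.1 p.2 * g p.1 * g p.2 * (f p.1 - f p.2) ^ 2)

/-- energy without the factor one half -/
noncomputable def en17 {X : Type} (a : X → X → ℝ) (g f : X → ℝ) : ℝ≥0∞ :=
  ∑' p : X × X, ENNReal.ofReal (a p.1 p.2 * g p.1 * g p.2 * (f p.1 - f p.2) ^ 2)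

theorem summable_prod_fin17 {X : Type} (F : X × X → ℝ) (S : Set X) (hS : S.Finite)
    (h0 : ∀ x, x ∉ S → ∀ y, F (x, y) = 0) (hF : ∀ x, Summable fun y => F (x, y)) :
    Summable F := by
  apply Summable.of_norm
  rw [summable_prod_of_nonneg (fun p => norm_nonneg _)]
  refine ⟨fun x => (hF x).norm, ?_⟩
  apply summable_of_hasFiniteSupport
  apply hS.subset
  intro x hx
  by_contra hxS
  apply hx
  simp [h0 x hxS]

theorem ground17 {X : Type} (a : X → X → ℝ) (q g φ : X → ℝ)
    (ha : ∀ x y, 0 ≤ a x y) (hs : ∀ x y, a x y = a y x) (hrow : ∀ x, Summable fun y => a x y)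
    (hg : ∀ x, 0 < g x) (hgm : memF a g) (hφ : (Function.support φ).Finite) :
    ∃ E : ℝ, en17 a g (fun x => φ x / g x) = ENNReal.ofReal E ∧ 0 ≤ E ∧
      quadForm a q φ = (1 / 2) * E + ∑' x, (schrod a q g x / g x) * φ x ^ 2 := by
  have hz : ∀ x, x ∉ Function.support φ → φ x = 0 := fun x hx => by simpa using hx
  have hag : ∀ x, Summable fun y => a x y * g y := fun x => by
    simpa only [abs_of_pos (hg _)] using hgm x
  have hdiff : ∀ x, Summable fun y => a x y * (g x - g y) := fun x => by
    have := ((hrow x).mul_right (g x)).sub (hag x)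
    refine this.congr fun y => by ring
  set T : X × X → ℝ := fun p => (φ p.1 ^ 2 / g p.1) * (a p.1 p.2 * (g p.1 - g p.2)) with hT
  have hTs : Summable T := by
    apply summable_prod_fin17 T _ hφ
    · intro x hx y; simp [hT, hz x hx]
    · intro x; exact (hdiff x).mul_left (φ x ^ 2 / g x)
  have hTs' : Summable (fun p : X × X => T p.swap) := (Equiv.prodComm X X).summable_iff.mpr hTs
  have hTe : ∑' p : X × X, T p.swap = ∑' p, T p := (Equiv.prodComm X X).tsum_eq T
  set U : X × X → ℝ := fun p => (φ p.1 ^ 2) * a p.1 p.2 with hU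
  have hUs : Summable U := by
    apply summable_prod_fin17 U _ hφ
    · intro x hx y; simp [hU, hz x hx]
    · intro x; exact (hrow x).mul_left (φ x ^ 2)
  have hUs' : Summable (fun p : X × X => U p.swap) := (Equiv.prodComm X X).summable_iff.mpr hUs
  have hQ : Summable fun p : X × X => a p.1 p.2 * (φ p.1 - φ p.2) ^ 2 := by
    refine Summable.of_nonneg_of_le (fun p => mul_nonneg (ha _ _) (sq_nonneg _)) ?_
      ((hUs.add hUs').mul_left 2)
    intro p
    simp only [hU, Prod.fst_swap, Prod.snd_swap]
    rw [hs p.2 p.1]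
    nlinarith [mul_nonneg (ha p.1 p.2) (sq_nonneg (φ p.1 + φ p.2))]
  have hpt : ∀ p : X × X, a p.1 p.2 * g p.1 * g p.2 * (φ p.1 / g p.1 - φ p.2 / g p.2) ^ 2
      = a p.1 p.2 * (φ p.1 - φ p.2) ^ 2 - (T p + T p.swap) := by
    intro p
    simp only [hT, Prod.fst_swap, Prod.snd_swap]
    rw [hs p.2 p.1]
    have h1 := (hg p.1).ne'
    have h2 := (hg p.2).ne'
    field_simp
    ring
  have hnn : ∀ p : X × X, 0 ≤ a p.1 p.2 * g p.1 * g p.2 * (φ p.1 / g p.1 - φ p.2 / g p.2) ^ 2 :=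
    fun p => mul_nonneg (mul_nonneg (mul_nonneg (ha _ _) (hg _).le) (hg _).le) (sq_nonneg _)
  have hG : Summable fun p : X × X =>
      a p.1 p.2 * g p.1 * g p.2 * (φ p.1 / g p.1 - φ p.2 / g p.2) ^ 2 :=
    (hQ.sub (hTs.add hTs')).congr fun p => (hpt p).symm
  refine ⟨_, (ENNReal.ofReal_tsum_of_nonneg hnn hG).symm, tsum_nonneg hnn, ?_⟩
  rw [tsum_congr hpt, hQ.tsum_sub (hTs.add hTs'), hTs.tsum_add hTs', hTe]
  have hTt : ∑' p, T p = ∑' x, (φ x ^ 2 / g x) * lap a g x := by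
    rw [hTs.tsum_prod' (fun x => (hdiff x).mul_left (φ x ^ 2 / g x))]
    refine tsum_congr fun x => ?_
    simp only [hT, lap]
    exact tsum_mul_left
  have hfs : ∀ c : X → ℝ, Summable fun x => c x * φ x ^ 2 := fun c => by
    apply summable_of_hasFiniteSupport
    apply hφ.subset
    intro x hx h
    exact hx (by simp [h])
  have hsc : ∑' x, (schrod a q g x / g x) * φ x ^ 2
      = ∑' x, (φ x ^ 2 / g x) * lap a g x + ∑' x, q x * φ x ^ 2 := by
    rw [← Summable.tsum_add _ (hfs q)]
    · refine tsum_congr fun x => ?_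
      have := (hg x).ne'
      unfold schrod
      field_simp
    · refine (hfs fun x => lap a g x / g x).congr fun x => by ring
  rw [hsc, hTt]
  unfold quadForm
  ring

theorem en_mono17 {X : Type} (a : X → X → ℝ) (g f₁ f₂ : X → ℝ)
    (ha : ∀ x y, 0 ≤ a x y) (hg : ∀ x, 0 < g x)
    (h : ∀ x y, (f₁ x - f₁ y) ^ 2 ≤ (f₂ x - f₂ y) ^ 2) : en17 a g f₁ ≤ en17 a g f₂ := by
  refine ENNReal.tsum_le_tsum fun p => ENNReal.ofReal_le_ofReal ?_
  exact mul_le_mul_of_nonneg_left (h _ _) (mul_nonneg (mul_nonneg (ha _ _) (hg _).le) (hg _).le)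

theorem en_comb17 {X : Type} (a : X → X → ℝ) (g f f₁ f₂ : X → ℝ) (s t : ℝ) (hs : 0 ≤ s) (ht : 0 ≤ t)
    (ha : ∀ x y, 0 ≤ a x y) (hg : ∀ x, 0 < g x)
    (h : ∀ x y, (f x - f y) ^ 2 ≤ s * (f₁ x - f₁ y) ^ 2 + t * (f₂ x - f₂ y) ^ 2) :
    en17 a g f ≤ ENNReal.ofReal s * en17 a g f₁ + ENNReal.ofReal t * en17 a g f₂ := by
  unfold en17
  rw [← ENNReal.tsum_mul_left, ← ENNReal.tsum_mul_left, ← ENNReal.tsum_add]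
  refine ENNReal.tsum_le_tsum fun p => ?_
  have hw := mul_nonneg (mul_nonneg (ha p.1 p.2) (hg p.1).le) (hg p.2).le
  rw [← ENNReal.ofReal_mul hs, ← ENNReal.ofReal_mul ht, ← ENNReal.ofReal_add
    (mul_nonneg hs (mul_nonneg hw (sq_nonneg _))) (mul_nonneg ht (mul_nonneg hw (sq_nonneg _)))]
  refine ENNReal.ofReal_le_ofReal ?_
  have := mul_le_mul_of_nonneg_left (h p.1 p.2) hw
  linarith

theorem clamp17 (l r s t : ℝ) :
    (max l (min r s) - max l (min r t)) ^ 2 ≤ (s - t) ^ 2 := by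
  rw [sq_le_sq]
  refine (abs_max_sub_max_le_max _ _ _ _).trans ?_
  refine max_le (by simp) ((abs_min_sub_min_le_max _ _ _ _).trans (max_le (by simp) le_rfl))

theorem cutoff17 {X : Type} (a : X → X → ℝ) (q u : X → ℝ)
    (ha : ∀ x y, 0 ≤ a x y) (hs : ∀ x y, a x y = a y x) (hrow : ∀ x, Summable fun y => a x y)
    (hu : ∀ x, 0 < u x) (hum : memF a u) (hharm : ∀ x, schrod a q u x = 0)
    (hcrit : (∀ φ : X → ℝ, (Function.support φ).Finite → 0 ≤ quadForm a q φ) ∧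
      ¬ ∃ wt : X → ℝ, (∀ x, 0 ≤ wt x) ∧ wt ≠ 0 ∧
        (∀ φ : X → ℝ, (Function.support φ).Finite →
          quadForm a q φ ≥ ∑' x : X, wt x * φ x ^ 2)) (K : Finset X) :
    ∀ ε : ℝ, 0 < ε → ∃ e : X → ℝ, (Function.support e).Finite ∧ (∀ x, 0 ≤ e x) ∧ (∀ x, e x ≤ 1) ∧
      (∀ x ∈ K, e x = 1) ∧ en17 a u e ≤ ENNReal.ofReal ε := by
  classical
  induction K using Finset.induction_on with
  | empty =>
    intro ε hε
    exact ⟨fun _ => 0, by simp, by simp, by simp, by simp, by simp [en17]⟩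
  | insert x K _ ih =>
    intro ε hε
    obtain ⟨e, he1, he2, he3, he4, he5⟩ := ih (ε / 2) (by linarith)
    obtain ⟨hpos, hno⟩ := hcrit
    push Not at hno
    set c : ℝ := ε / 4 / u x ^ 2 with hc
    have hux := hu x
    have hc0 : 0 < c := by positivity
    obtain ⟨φ, hφ, hlt⟩ := hno (Pi.single x c)
      (fun y => by by_cases h : y = x <;> simp [h, hc0.le])
      (fun h => by have := congrFun h x; simp at this; exact hc0.ne' this)
    have hsum : ∑' y, (Pi.single x c : X → ℝ) y * φ y ^ 2 = c * φ x ^ 2 := by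
      rw [tsum_eq_single x]
      · simp
      · intro y hy; simp [hy]
    rw [hsum] at hlt
    have h0 := hpos φ hφ
    have hφx : φ x ≠ 0 := by
      intro h; rw [h] at hlt; norm_num at hlt; linarith
    obtain ⟨E, hE, hE0, hEq⟩ := ground17 a q u φ ha hs hrow hu hum hφ
    simp only [hharm, zero_div, zero_mul, tsum_zero, add_zero] at hEq
    set d : ℝ := u x / φ x with hd
    set e₁ : X → ℝ := fun y => max 0 (min 1 (d * (φ y / u y))) with he₁
    have hen : en17 a u e₁ ≤ ENNReal.ofReal (ε / 2) := by
      have := en_comb17 a u e₁ (fun y => φ y / u y) (fun y => φ y / u y) (d ^ 2) 0 (sq_nonneg _)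
        le_rfl ha hu (fun y z => by
          have := clamp17 0 1 (d * (φ y / u y)) (d * (φ z / u z))
          simp only [he₁]
          nlinarith)
      refine this.trans ?_
      rw [hE, ENNReal.ofReal_zero, zero_mul, add_zero, ← ENNReal.ofReal_mul (sq_nonneg _)]
      refine ENNReal.ofReal_le_ofReal ?_
      have h2 : E ≤ 2 * (c * φ x ^ 2) := by linarith
      calc d ^ 2 * E ≤ d ^ 2 * (2 * (c * φ x ^ 2)) := mul_le_mul_of_nonneg_left h2 (sq_nonneg _)
        _ = ε / 2 := by
          rw [hd, hc]; field_simp; norm_num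
    refine ⟨fun y => max (e y) (e₁ y), ?_, fun y => le_max_of_le_left (he2 y),
      fun y => max_le (he3 y) (max_le zero_le_one (min_le_left _ _)), ?_, ?_⟩
    · refine (he1.union hφ).subset ?_
      intro y hy
      by_contra h
      simp only [Set.mem_union, Function.mem_support, not_or, not_not] at h
      apply hy
      simp [he₁, h.1, h.2]
    · intro y hy
      rcases Finset.mem_insert.mp hy with rfl | hy
      · have : d * (φ y / u y) = 1 := by rw [hd]; field_simp
        simp [he₁, this, he3 y]
      · have : e₁ y ≤ 1 := max_le zero_le_one (min_le_left _ _)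
        simp [he4 y hy, this]
    · have := en_comb17 a u (fun y => max (e y) (e₁ y)) e e₁ 1 1 zero_le_one zero_le_one ha hu
        (fun y z => by
          have h := abs_max_sub_max_le_max (e y) (e₁ y) (e z) (e₁ z)
          have h1 := sq_le_sq' (by linarith [abs_nonneg (max (e y) (e₁ y) - max (e z) (e₁ z)), (abs_nonneg _).trans h]) h
          rw [sq_abs] at h1
          rcases max_choice |e y - e z| |e₁ y - e₁ z| with h2 | h2 <;>
            rw [h2, sq_abs] at h1 <;>
            nlinarith [sq_nonneg (e y - e z), sq_nonneg (e₁ y - e₁ z)])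
      refine this.trans ?_
      rw [ENNReal.ofReal_one, one_mul, one_mul]
      refine (add_le_add he5 hen).trans ?_
      rw [← ENNReal.ofReal_add (by linarith) (by linarith)]
      exact ENNReal.ofReal_le_ofReal (by linarith)

theorem prodest17 (δ k e₁ e₂ g₁ g₂ : ℝ) (hδ : 0 < δ) (h0 : 0 ≤ e₁) (h1 : e₁ ≤ 1)
    (hg : |g₂| ≤ k) :
    (e₁ * g₁ - e₂ * g₂) ^ 2 ≤ (1 + δ) * (g₁ - g₂) ^ 2 + ((1 + 1 / δ) * k ^ 2) * (e₁ - e₂) ^ 2 := by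
  set A := e₁ * (g₁ - g₂) with hA
  set B := g₂ * (e₁ - e₂) with hB
  have e : e₁ * g₁ - e₂ * g₂ = A + B := by rw [hA, hB]; ring
  have key : (A + B) ^ 2 ≤ (1 + δ) * A ^ 2 + (1 + 1 / δ) * B ^ 2 := by
    have : (1 + δ) * A ^ 2 + (1 + 1 / δ) * B ^ 2 - (A + B) ^ 2 = (δ * A - B) ^ 2 / δ := by
      field_simp; ring
    have h : 0 ≤ (δ * A - B) ^ 2 / δ := by positivity
    linarith
  have hA2 : A ^ 2 ≤ (g₁ - g₂) ^ 2 := by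
    rw [hA, mul_pow]
    exact mul_le_of_le_one_left (sq_nonneg _) (by nlinarith)
  have hB2 : B ^ 2 ≤ k ^ 2 * (e₁ - e₂) ^ 2 := by
    rw [hB, mul_pow]
    refine mul_le_mul_of_nonneg_right ?_ (sq_nonneg _)
    rw [← sq_abs]; exact pow_le_pow_left₀ (abs_nonneg _) hg 2
  rw [e, mul_assoc (1 + 1 / δ)]
  refine key.trans (add_le_add ?_ ?_)
  · exact mul_le_mul_of_nonneg_left hA2 (by linarith)
  · exact mul_le_mul_of_nonneg_left hB2 (by positivity)

/-- extension of a comparison of forms outside `W` to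
not necessarily finitely supported functions. -/
theorem stmt17 (X : Type) [Countable X] [Infinite X]
    (b b' : X → X → ℝ) (q q' : X → ℝ)
    (hb_nonneg : ∀ x y, 0 ≤ b x y) (hb_symm : ∀ x y, b x y = b y x)
    (hb_diag : ∀ x, b x x = 0) (hb_row : ∀ x, Summable fun y => b x y)
    (hb'_nonneg : ∀ x y, 0 ≤ b' x y) (hb'_symm : ∀ x y, b' x y = b' y x)
    (hb'_diag : ∀ x, b' x x = 0) (hb'_row : ∀ x, Summable fun y => b' x y)
    (v : X → ℝ) (hv_pos : ∀ x, 0 < v x)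
    (hv_mem : memF b v) (hv_super : ∀ x, 0 ≤ schrod b q v x)
    (hsv_mem : memF b' (fun x => Real.sqrt (v x)))
    (hsv_harm : ∀ x, schrod b' q' (fun z => Real.sqrt (v z)) x = 0)
    (hcrit : (∀ φ : X → ℝ, (Function.support φ).Finite → 0 ≤ quadForm b' q' φ) ∧
      ¬ ∃ wt : X → ℝ, (∀ x, 0 ≤ wt x) ∧ wt ≠ 0 ∧
        (∀ φ : X → ℝ, (Function.support φ).Finite →
          quadForm b' q' φ ≥ ∑' x : X, wt x * φ x ^ 2))
    (W : Set X) (C : ℝ) (hC : 0 ≤ C)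
    (hdom : ∀ φ : X → ℝ, (Function.support φ).Finite → (∀ x ∈ W, φ x = 0) →
      quadForm b q φ ≤ C * quadForm b' q' φ) :
    ∀ f : X → ℝ, (∀ x ∈ W, f x = 0) →
      extForm b v (fun x => f x / v x) ≤
        ENNReal.ofReal C *
          extForm b' (fun x => Real.sqrt (v x)) (fun x => f x / Real.sqrt (v x)) := by
  classical
  intro f hf
  set u : X → ℝ := fun x => Real.sqrt (v x) with hu_def
  have hu : ∀ x, 0 < u x := fun x => Real.sqrt_pos.mpr (hv_pos x)
  -- comparison for finitely supported functions
  have hfin : ∀ φ : X → ℝ, (Function.support φ).Finite → (∀ x ∈ W, φ x = 0) →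
      en17 b v (fun x => φ x / v x) ≤ ENNReal.ofReal C * en17 b' u (fun x => φ x / u x) := by
    intro φ hφ hW
    obtain ⟨E, hE, hE0, hEq⟩ := ground17 b q v φ hb_nonneg hb_symm hb_row hv_pos hv_mem hφ
    obtain ⟨E', hE', hE0', hEq'⟩ :=
      ground17 b' q' u φ hb'_nonneg hb'_symm hb'_row hu hsv_mem hφ
    have hharm : ∀ x, schrod b' q' u x = 0 := hsv_harm
    simp only [hharm, zero_div, zero_mul, tsum_zero, add_zero] at hEq'
    have hd := hdom φ hφ hW
    have hn : 0 ≤ ∑' x, (schrod b q v x / v x) * φ x ^ 2 :=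
      tsum_nonneg fun x => mul_nonneg (div_nonneg (hv_super x) (hv_pos x).le) (sq_nonneg _)
    rw [hE, hE', ← ENNReal.ofReal_mul hC]
    refine ENNReal.ofReal_le_ofReal ?_
    rw [hEq, hEq'] at hd
    linarith
  have main : en17 b v (fun x => f x / v x) ≤
      ENNReal.ofReal C * en17 b' u (fun x => f x / u x) := by
    refine ENNReal.summable.tsum_le_of_sum_le fun P => ?_
    set K : Finset X := P.image Prod.fst ∪ P.image Prod.snd with hK
    -- compare with a function that agrees on K
    have hagree : ∀ φ : X → ℝ, (∀ x ∈ K, φ x = f x) →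
        ∑ p ∈ P, ENNReal.ofReal (b p.1 p.2 * v p.1 * v p.2 * (f p.1 / v p.1 - f p.2 / v p.2) ^ 2)
          ≤ en17 b v (fun x => φ x / v x) := by
      intro φ h
      refine le_trans (le_of_eq ?_) (ENNReal.sum_le_tsum P)
      refine Finset.sum_congr rfl fun p hp => ?_
      beta_reduce
      rw [h p.1 (Finset.mem_union_left _ (Finset.mem_image_of_mem _ hp)),
        h p.2 (Finset.mem_union_right _ (Finset.mem_image_of_mem _ hp))]
    rcases hC.eq_or_lt with hC0 | hCpos
    · have h1 := hagree (fun x => if x ∈ K then f x else 0) (fun x hx => by simp [hx])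
      have h2 := hfin (fun x => if x ∈ K then f x else 0)
        (K.finite_toSet.subset fun x hx => by
          by_contra h; exact hx (if_neg h))
        (fun x hx => by simp [hf x hx])
      refine h1.trans (h2.trans ?_)
      simp [← hC0]
    by_cases htop : en17 b' u (fun x => f x / u x) = ⊤
    · rw [htop, ENNReal.mul_top (by simpa using hCpos)]
      exact le_top
    set A : ℝ := (en17 b' u (fun x => f x / u x)).toReal with hA
    have hAe : en17 b' u (fun x => f x / u x) = ENNReal.ofReal A :=
      (ENNReal.ofReal_toReal htop).symm
    have hA0 : 0 ≤ A := ENNReal.toReal_nonneg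
    set k : ℝ := ∑ x ∈ K, |f x / u x| with hk
    have hk0 : 0 ≤ k := Finset.sum_nonneg fun _ _ => abs_nonneg _
    have hkK : ∀ x ∈ K, |f x / u x| ≤ k := fun x hx =>
      Finset.single_le_sum (f := fun x => |f x / u x|) (fun _ _ => abs_nonneg _) hx
    set gk : X → ℝ := fun x => max (-k) (min k (f x / u x)) with hgk
    have hgkb : ∀ x, |gk x| ≤ k := fun x =>
      abs_le.mpr ⟨le_max_left _ _, max_le (by linarith) (min_le_left _ _)⟩
    have step : ∀ δ : ℝ, 0 < δ →
        ∑ p ∈ P, ENNReal.ofReal (b p.1 p.2 * v p.1 * v p.2 * (f p.1 / v p.1 - f p.2 / v p.2) ^ 2)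
          ≤ ENNReal.ofReal (C * ((1 + δ) * A + δ)) := by
      intro δ hδ
      set M : ℝ := (1 + 1 / δ) * k ^ 2 with hM
      have hM0 : 0 ≤ M := by positivity
      obtain ⟨e, he1, he2, he3, he4, he5⟩ := cutoff17 b' q' u hb'_nonneg hb'_symm hb'_row hu
        hsv_mem hsv_harm hcrit K (δ / (M + 1)) (by positivity)
      have hdivu : (fun x => (e x * gk x * u x) / u x) = fun x => e x * gk x := by
        funext x; exact mul_div_cancel_right₀ _ (hu x).ne'
      have h1 := hagree (fun x => e x * gk x * u x) (fun x hx => by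
        have h := abs_le.mp (hkK x hx)
        have : gk x = f x / u x := by
          simp only [hgk]
          rw [min_eq_right h.2, max_eq_right h.1]
        simp only [he4 x hx, this, one_mul]
        exact div_mul_cancel₀ _ (hu x).ne')
      have h2 := hfin (fun x => e x * gk x * u x)
        (he1.subset fun x hx h => hx (by simp [h]))
        (fun x hx => by simp [hgk, hf x hx, hk0])
      rw [hdivu] at h2
      have h3 := en_comb17 b' u (fun x => e x * gk x) gk e (1 + δ) M (by linarith) hM0
        hb'_nonneg hu (fun x y => prodest17 δ k (e x) (e y) (gk x) (gk y) hδ (he2 x) (he3 x)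
          (hgkb y))
      have h4 : en17 b' u gk ≤ ENNReal.ofReal A := by
        rw [← hAe]
        exact en_mono17 b' u _ _ hb'_nonneg hu fun x y => clamp17 _ _ _ _
      refine h1.trans (h2.trans ?_)
      rw [ENNReal.ofReal_mul hC]
      refine mul_le_mul_right ?_ _
      refine h3.trans ?_
      have h5 : ENNReal.ofReal ((1 + δ) * A + δ)
          = ENNReal.ofReal (1 + δ) * ENNReal.ofReal A + ENNReal.ofReal δ := by
        rw [ENNReal.ofReal_add (by positivity) hδ.le, ENNReal.ofReal_mul (by linarith)]
      rw [h5]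
      refine add_le_add (mul_le_mul_right h4 _) ?_
      refine (mul_le_mul_right he5 _).trans ?_
      rw [← ENNReal.ofReal_mul hM0]
      refine ENNReal.ofReal_le_ofReal ?_
      rw [mul_div_assoc', div_le_iff₀ (by linarith)]
      nlinarith
    rw [hAe, ← ENNReal.ofReal_mul hC]
    have hlim : Filter.Tendsto (fun δ : ℝ => ENNReal.ofReal (C * ((1 + δ) * A + δ)))
        (nhdsWithin 0 (Set.Ioi 0)) (nhds (ENNReal.ofReal (C * A))) := by
      have hc : Continuous fun δ : ℝ => ENNReal.ofReal (C * ((1 + δ) * A + δ)) :=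
        ENNReal.continuous_ofReal.comp (by fun_prop)
      have := hc.tendsto 0
      simp only [add_zero, one_mul] at this
      exact this.mono_left nhdsWithin_le_nhds
    refine ge_of_tendsto hlim ?_
    filter_upwards [self_mem_nhdsWithin] with δ hδ using step δ hδ
  have e1 : extForm b v (fun x => f x / v x) = (1 / 2 : ℝ≥0∞) * en17 b v (fun x => f x / v x) := rfl
  have e2 : extForm b' u (fun x => f x / Real.sqrt (v x))
      = (1 / 2 : ℝ≥0∞) * en17 b' u (fun x => f x / u x) := rfl
  rw [e1, e2, mul_left_comm]
  exact mul_le_mul_right main _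
end

section
/- For every finitely supported function φ : ℕ₀ → ℝ with φ(0) = 0, one has Σ_{n=0}^{∞} (φ(n) − φ(n+1))² ≥ Σ_{n=1}^{∞} w(n)·φ(n)², where w(n) := 2 − (1 + 1/n)^{1/2} − (1 − 1/n)^{1/2} for n ≥ 1 (so in particular w(1) = 2 − √2). Moreover, w(n) > 1/(4n²) for every integer n ≥ 1. -/
lemma hardy_step (n : ℕ) (hn : 1 ≤ n) (a b : ℝ) :
    (a - b) ^ 2 ≥ (1 - Real.sqrt (1 + 1 / (n : ℝ))) * a ^ 2
      + (1 - Real.sqrt (1 - 1 / ((n : ℝ) + 1))) * b ^ 2 := by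
  have hn' : (0 : ℝ) < n := by exact_mod_cast hn
  set r := Real.sqrt (1 + 1 / (n : ℝ)) with hr
  set s := Real.sqrt (1 - 1 / ((n : ℝ) + 1)) with hs
  have e2 : (0 : ℝ) ≤ 1 - 1 / ((n : ℝ) + 1) := by
    have : 1 - 1 / ((n : ℝ) + 1) = n / (n + 1) := by field_simp; ring
    rw [this]; positivity
  have hrs : r * s = 1 := by
    rw [hr, hs, ← Real.sqrt_mul (by positivity)]
    have : (1 + 1 / (n : ℝ)) * (1 - 1 / ((n : ℝ) + 1)) = 1 := by field_simp; ring
    rw [this, Real.sqrt_one]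
  have hr0 : 0 ≤ r := Real.sqrt_nonneg _
  have hs0 : 0 ≤ s := Real.sqrt_nonneg _
  have key : 0 ≤ r * (a - s * b) ^ 2 := by positivity
  have : r * (a - s * b) ^ 2 = r * a ^ 2 - 2 * (r * s) * a * b + (r * s) * s * b ^ 2 := by ring
  rw [this, hrs] at key
  nlinarith

lemma hardy_partial (φ : ℕ → ℝ) (h0 : φ 0 = 0) (N : ℕ) :
    (∑ n ∈ Finset.range N, (φ n - φ (n + 1)) ^ 2) ≥
      (∑ n ∈ Finset.range N,
          (2 - Real.sqrt (1 + 1 / ((n : ℝ) + 1)) - Real.sqrt (1 - 1 / ((n : ℝ) + 1))) *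
            φ (n + 1) ^ 2) + (Real.sqrt (1 + 1 / (N : ℝ)) - 1) * φ N ^ 2 := by
  induction N with
  | zero => simp [h0]
  | succ k ih =>
    rw [Finset.sum_range_succ, Finset.sum_range_succ]
    push_cast
    rcases Nat.eq_zero_or_pos k with rfl | hk
    · simp [h0]
      nlinarith
    · have := hardy_step k hk (φ k) (φ (k + 1))
      nlinarith

/-- an improved discrete Hardy inequality on the half line,
with weight `w(n) = 2 - √(1+1/n) - √(1-1/n) > 1/(4n²)`. -/
theorem stmt18 :
    (∀ φ : ℕ → ℝ, (Function.support φ).Finite → φ 0 = 0 →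
      (∑' n : ℕ, (φ n - φ (n + 1)) ^ 2) ≥
        ∑' n : ℕ,
          (2 - Real.sqrt (1 + 1 / ((n : ℝ) + 1)) - Real.sqrt (1 - 1 / ((n : ℝ) + 1))) *
            φ (n + 1) ^ 2) ∧
    (∀ n : ℕ, 1 ≤ n →
      1 / (4 * (n : ℝ) ^ 2) <
        2 - Real.sqrt (1 + 1 / (n : ℝ)) - Real.sqrt (1 - 1 / (n : ℝ))) := by
  constructor
  · intro φ hφ h0
    obtain ⟨M, hM⟩ := hφ.bddAbove
    have hz : ∀ n, M < n → φ n = 0 := by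
      intro n hn
      by_contra h
      exact absurd (hM (show n ∈ Function.support φ from h)) (by omega)
    have hp := hardy_partial φ h0 (M + 1)
    rw [hz (M + 1) (by omega)] at hp
    rw [tsum_eq_sum (s := Finset.range (M + 1)), tsum_eq_sum (s := Finset.range (M + 1))]
    · simpa using hp
    · intro n hn
      rw [Finset.mem_range] at hn
      rw [hz (n + 1) (by omega)]; simp
    · intro n hn
      rw [Finset.mem_range] at hn
      rw [hz (n + 1) (by omega), hz n (by omega)]; simp
  · intro n hn
    have hn' : (1 : ℝ) ≤ n := by exact_mod_cast hn
    have hx0 : 0 < 1 / (n : ℝ) := by positivity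
    have hx1 : 1 / (n : ℝ) ≤ 1 := by rw [div_le_one (by positivity)]; exact hn'
    have e : 1 / (4 * (n : ℝ) ^ 2) = (1 / (n : ℝ)) ^ 2 / 4 := by field_simp
    rw [e]
    generalize 1 / (n : ℝ) = x at hx0 hx1
    have hr := Real.sq_sqrt (show 0 ≤ 1 + x by linarith)
    have hs := Real.sq_sqrt (show 0 ≤ 1 - x by linarith)
    have hr0 := Real.sqrt_nonneg (1 + x)
    have hs0 := Real.sqrt_nonneg (1 - x)
    generalize Real.sqrt (1 + x) = r at *
    generalize Real.sqrt (1 - x) = s at *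
    have hx2 : x ^ 2 ≤ 1 := by nlinarith
    have hx4 : 0 < x ^ 4 := by positivity
    have h1 : r * s ≤ 1 - x ^ 2 / 2 := by
      apply abs_le_of_sq_le_sq' _ (by linarith) |>.2
      have : (r * s) ^ 2 = (1 + x) * (1 - x) := by rw [mul_pow, hr, hs]
      rw [this]; nlinarith
    have h2 : r + s < 2 - x ^ 2 / 4 := by
      apply lt_of_pow_lt_pow_left₀ 2 (by linarith)
      nlinarith
    linarith
end
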